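/- arXiv:1907.00589 — 9 statements merged into one kernel-verified Lean document; each statement's English description precedes it below -/
import Mathlib

section
/- Let d ∈ ℕ, let a_1,…,a_d and b_1,…,b_d be positive real numbers, and set p_d = max{1, 2b_1, 2b_2, …, 2b_d}. Then for all x, y ∈ ℝ^d: (Σ_{j=1}^d a_j |x_j + y_j|^{2b_j})^{1/p_d} ≤ (Σ_{j=1}^d a_j |x_j|^{2b_j})^{1/p_d} + (Σ_{j=1}^d a_j |y_j|^{2b_j})^{1/p_d}. -/
/-!
Put `f_j(t) = (a_j |t| ^ (2 b_j)) ^ (1/p) = a_j ^ (1/p) * |t| ^ (2 b_j / p)`. Since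
`0 ≤ 2 b_j / p ≤ 1`, the function `s ↦ s ^ (2 b_j / p)` is monotone and subadditive on `[0, ∞)`, so
`f_j(x_j + y_j) ≤ f_j(x_j) + f_j(y_j)`. As `f_j(t) ^ p` is the `j`-th summand and `1 ≤ p`, the claim
is Minkowski's inequality in `ℓ^p` for the vectors `(f_j(x_j))_j` and `(f_j(y_j))_j`.
-/

/-- The `p`-th root of `a * |t| ^ c` is subadditive in `t`, because its exponent `c / p` is at
most `1`. -/
lemma root_mul_abs_rpow_subadd {a c p : ℝ} (ha : 0 ≤ a) (hc : 0 ≤ c) (hp : 1 ≤ p) (hcp : c ≤ p)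
    (s t : ℝ) :
    (a * |s + t| ^ c) ^ (1 / p) ≤ (a * |s| ^ c) ^ (1 / p) + (a * |t| ^ c) ^ (1 / p) := by
  have hp0 : 0 < p := by linarith
  have key : ∀ u : ℝ, (a * |u| ^ c) ^ (1 / p) = a ^ (1 / p) * |u| ^ (c / p) := fun u => by
    rw [Real.mul_rpow ha (by positivity), ← Real.rpow_mul (abs_nonneg u), mul_one_div]
  rw [key, key, key, ← mul_add]
  gcongr
  calc |s + t| ^ (c / p) ≤ (|s| + |t|) ^ (c / p) := by
        gcongr
        exact abs_add_le s t
    _ ≤ |s| ^ (c / p) + |t| ^ (c / p) :=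
        Real.rpow_add_le_add_rpow (abs_nonneg s) (abs_nonneg t) (by positivity)
          ((div_le_one hp0).2 hcp)

/-- Triangle-type inequality: with `p = max{1, 2b_1, …, 2b_d}`, for all `x, y ∈ ℝ^d`,
`(∑ a_j |x_j + y_j|^{2b_j})^{1/p} ≤ (∑ a_j |x_j|^{2b_j})^{1/p} + (∑ a_j |y_j|^{2b_j})^{1/p}`. -/
theorem weighted_sum_rpow_triangle
    (d : ℕ) (hd : 0 < d) (a b : Fin d → ℝ)
    (ha : ∀ j, 0 < a j) (hb : ∀ j, 0 < b j)
    (p : ℝ) (hp : p = max 1 (⨆ j, 2 * b j))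
    (x y : Fin d → ℝ) :
    (∑ j, a j * |x j + y j| ^ (2 * b j)) ^ (1 / p) ≤
      (∑ j, a j * |x j| ^ (2 * b j)) ^ (1 / p) +
        (∑ j, a j * |y j| ^ (2 * b j)) ^ (1 / p) := by
  have hp1 : 1 ≤ p := hp ▸ le_max_left _ _
  have hp0 : 0 < p := by linarith
  have hbp : ∀ j, 2 * b j ≤ p := fun j =>
    hp ▸ (le_ciSup (Set.finite_range fun j => 2 * b j).bddAbove j).trans (le_max_right _ _)
  have hnn : ∀ (z : Fin d → ℝ) (j), 0 ≤ a j * |z j| ^ (2 * b j) := fun z j =>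
    mul_nonneg (ha j).le (by positivity)
  have hpow : ∀ (z : Fin d → ℝ) (j),
      ((a j * |z j| ^ (2 * b j)) ^ (1 / p)) ^ p = a j * |z j| ^ (2 * b j) := fun z j => by
    rw [one_div, Real.rpow_inv_rpow (hnn z j) hp0.ne']
  have mink := Real.Lp_add_le_of_nonneg (s := Finset.univ) hp1
    (f := fun j => (a j * |x j| ^ (2 * b j)) ^ (1 / p))
    (g := fun j => (a j * |y j| ^ (2 * b j)) ^ (1 / p))
    (fun j _ => Real.rpow_nonneg (hnn x j) _) (fun j _ => Real.rpow_nonneg (hnn y j) _)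
  simp only [hpow] at mink
  refine le_trans (Real.rpow_le_rpow (Finset.sum_nonneg fun j _ => hnn (x + y) j)
    (Finset.sum_le_sum fun j _ => ?_) (by positivity)) mink
  refine (hpow (x + y) j).ge.trans ?_
  exact Real.rpow_le_rpow (Real.rpow_nonneg (hnn (x + y) j) _)
    (root_mul_abs_rpow_subadd (ha j).le (by linarith [hb j]) hp1 (hbp j) (x j) (y j)) hp0.le
end

section
/- Let d ∈ ℕ, let a_1,…,a_d and b_1,…,b_d be positive real numbers, let m ∈ ℕ, and set p_d = max{1, 2b_1, …, 2b_d} and C_{a,b,d} = (Σ_{j=1}^d a_j 2^{-2b_j})^{1/p_d}. For k ∈ ℤ^d let Q_k = {x ∈ ℝ^d : |x_j - k_j| ≤ 1/2 for all j = 1,…,d} be the axis-parallel unit cube centered at k. Then the union of the cubes Q_k over all k ∈ ℤ^d with Σ_{j=1}^d a_j |k_j|^{2b_j} ≤ m^{p_d} is contained in the set {x ∈ ℝ^d : Σ_{j=1}^d a_j |x_j|^{2b_j} ≤ (m + C_{a,b,d})^{p_d}}. -/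
/-!
Raising to the power `1 / p` turns the claim into a triangle inequality. Since `2 * b j / p ≤ 1`,
the map `t ↦ t ^ (2 * b j / p)` is subadditive, so `|x j| ≤ |k j| + 1 / 2` gives
`(a j * |x j| ^ (2 * b j)) ^ (1 / p) ≤ f j + g j`, where `f j` and `g j` are the same expression at
`k j` and at `1 / 2`. As `p ≥ 1`, Minkowski's inequality bounds the `ℓ^p` norm of `f + g` by the
norm of `f`, which is at most `m`, plus the norm of `g`, which is `C`.
-/

/-- Subadditivity of `t ↦ (a * t ^ q) ^ (1 / p)` on the nonnegative reals for `0 ≤ q ≤ p`. -/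
lemma weighted_rpow_add_le {a q p u v : ℝ} (ha : 0 ≤ a) (hq : 0 ≤ q) (hp : 0 < p) (hqp : q ≤ p)
    (hu : 0 ≤ u) (hv : 0 ≤ v) :
    (a * (u + v) ^ q) ^ (1 / p) ≤ (a * u ^ q) ^ (1 / p) + (a * v ^ q) ^ (1 / p) := by
  have h (t : ℝ) (ht : 0 ≤ t) : (a * t ^ q) ^ (1 / p) = a ^ (1 / p) * t ^ (q / p) := by
    rw [Real.mul_rpow ha (Real.rpow_nonneg ht q), ← Real.rpow_mul ht, mul_one_div]
  rw [h _ (add_nonneg hu hv), h _ hu, h _ hv, ← mul_add]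
  exact mul_le_mul_of_nonneg_left
    (Real.rpow_add_le_add_rpow hu hv (div_nonneg hq hp.le) ((div_le_one hp).2 hqp))
    (Real.rpow_nonneg ha _)

/-- The union of the unit cubes `Q_k` centered at the lattice points `k ∈ ℤ^d` with
`∑ a_j |k_j|^{2b_j} ≤ m^{p}` is contained in
`{x ∈ ℝ^d : ∑ a_j |x_j|^{2b_j} ≤ (m + C)^{p}}`, where `p = max{1, 2b_1, …, 2b_d}`
and `C = (∑ a_j 2^{-2b_j})^{1/p}`. -/
theorem union_cubes_subset_ellipsoid
    (d : ℕ) (hd : 0 < d) (a b : Fin d → ℝ)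
    (ha : ∀ j, 0 < a j) (hb : ∀ j, 0 < b j) (m : ℕ)
    (p C : ℝ) (hp : p = max 1 (⨆ j, 2 * b j))
    (hC : C = (∑ j, a j * (2 : ℝ) ^ (-(2 * b j))) ^ (1 / p)) :
    (⋃ k ∈ {k : Fin d → ℤ | ∑ j, a j * |(k j : ℝ)| ^ (2 * b j) ≤ (m : ℝ) ^ p},
        {x : Fin d → ℝ | ∀ j, |x j - (k j : ℝ)| ≤ 1 / 2}) ⊆
      {x : Fin d → ℝ | ∑ j, a j * |x j| ^ (2 * b j) ≤ ((m : ℝ) + C) ^ p} := by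
  have hp1 : 1 ≤ p := hp ▸ le_max_left _ _
  have hp0 : 0 < p := one_pos.trans_le hp1
  have hbp (j) : 2 * b j ≤ p :=
    hp ▸ (le_ciSup (f := fun j => 2 * b j) (Set.finite_range _).bddAbove j).trans (le_max_right _ _)
  have hb0 (j) : 0 ≤ 2 * b j := by linarith [hb j]
  have hnn (j) (t : ℝ) (ht : 0 ≤ t) : 0 ≤ a j * t ^ (2 * b j) :=
    mul_nonneg (ha j).le (Real.rpow_nonneg ht _)
  have hpow (t : ℝ) (ht : 0 ≤ t) : (t ^ (1 / p)) ^ p = t := by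
    rw [one_div, Real.rpow_inv_rpow ht hp0.ne']
  intro x hx
  simp only [Set.mem_iUnion, Set.mem_setOf_eq, exists_prop] at hx ⊢
  obtain ⟨k, hk, hxk⟩ := hx
  set f : Fin d → ℝ := fun j => (a j * |(k j : ℝ)| ^ (2 * b j)) ^ (1 / p) with hf
  set g : Fin d → ℝ := fun j => (a j * (1 / 2 : ℝ) ^ (2 * b j)) ^ (1 / p) with hg
  have hf0 (j) : 0 ≤ f j := Real.rpow_nonneg (hnn j _ (abs_nonneg _)) _
  have hg0 (j) : 0 ≤ g j := Real.rpow_nonneg (hnn j _ (by norm_num)) _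
  have hterm (j) : a j * |x j| ^ (2 * b j) ≤ (f j + g j) ^ p := by
    have hxj : |x j| ≤ |(k j : ℝ)| + 1 / 2 := by
      linarith [abs_sub_abs_le_abs_sub (x j) (k j : ℝ), hxk j]
    have hs : 0 ≤ |(k j : ℝ)| + 1 / 2 := by positivity
    calc a j * |x j| ^ (2 * b j) ≤ a j * (|(k j : ℝ)| + 1 / 2) ^ (2 * b j) :=
          mul_le_mul_of_nonneg_left (Real.rpow_le_rpow (abs_nonneg _) hxj (hb0 j)) (ha j).le
      _ = ((a j * (|(k j : ℝ)| + 1 / 2) ^ (2 * b j)) ^ (1 / p)) ^ p := (hpow _ (hnn j _ hs)).symm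
      _ ≤ (f j + g j) ^ p := Real.rpow_le_rpow (Real.rpow_nonneg (hnn j _ hs) _)
          (weighted_rpow_add_le (ha j).le (hb0 j) hp0 (hbp j) (abs_nonneg _) (by norm_num)) hp0.le
  have hfm : (∑ j, f j ^ p) ^ (1 / p) ≤ m := by
    have hfs : ∑ j, f j ^ p = ∑ j, a j * |(k j : ℝ)| ^ (2 * b j) :=
      Finset.sum_congr rfl fun j _ => hpow _ (hnn j _ (abs_nonneg _))
    rw [hfs, one_div]
    exact (Real.rpow_inv_le_iff_of_pos (Finset.sum_nonneg fun j _ => hnn j _ (abs_nonneg _))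
      m.cast_nonneg hp0).2 hk
  have hgC : (∑ j, g j ^ p) ^ (1 / p) = C := by
    rw [hC]
    congr 1
    refine Finset.sum_congr rfl fun j _ => ?_
    rw [hg, hpow _ (hnn j _ (by norm_num)), one_div, Real.inv_rpow zero_le_two,
      Real.rpow_neg zero_le_two]
  have hS : 0 ≤ ∑ j, (f j + g j) ^ p :=
    Finset.sum_nonneg fun j _ => Real.rpow_nonneg (add_nonneg (hf0 j) (hg0 j)) _
  calc ∑ j, a j * |x j| ^ (2 * b j) ≤ ∑ j, (f j + g j) ^ p :=
        Finset.sum_le_sum fun j _ => hterm j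
    _ = ((∑ j, (f j + g j) ^ p) ^ (1 / p)) ^ p := (hpow _ hS).symm
    _ ≤ (m + C) ^ p := by
        refine Real.rpow_le_rpow (Real.rpow_nonneg hS _) ?_ hp0.le
        have := Real.Lp_add_le_of_nonneg (s := Finset.univ) hp1
          (fun j _ => hf0 j) (fun j _ => hg0 j)
        linarith
end

section
/- Let d ∈ ℕ, let a_1,…,a_d and b_1,…,b_d be positive real numbers, let m ∈ ℕ, and set p_d = max{1, 2b_1, …, 2b_d} and C_{a,b,d} = (Σ_{j=1}^d a_j 2^{-2b_j})^{1/p_d}. Then the set {x ∈ ℝ^d : Σ_{j=1}^d a_j |x_j|^{2b_j} ≤ ((m - C_{a,b,d})_+)^{p_d}} is contained in the union of the unit cubes Q_k over all k ∈ ℤ^d with Σ_{j=1}^d a_j |k_j|^{2b_j} ≤ m^{p_d}, where (u)_+ = max{u, 0} and Q_k = {x ∈ ℝ^d : |x_j - k_j| ≤ 1/2 for all j}. -/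
/-!
Round each coordinate of `x` to a nearest integer `k j`, so that `|k j| ≤ |x j| + 1/2`; then `x`
lies in `Q_k`, and only the bound on `k` is at stake. With `q j = 2 * b j ≤ p` and `1 ≤ p`, the
functional `N y = (∑ a j * |y j| ^ q j) ^ (1 / p)` is the `ℓ^p` norm of the vector
`a j ^ (1 / p) * |y j| ^ (q j / p)`. As `q j / p ≤ 1`, the power `s ↦ s ^ (q j / p)` is subadditive,
so Minkowski's inequality in `ℓ^p` makes `N` subadditive (`anisotropic_minkowski`). Hence
`N k ≤ N x + N (1/2, …, 1/2) ≤ (m - C) + C = m` if `C ≤ m`. If `m < C`, the set on the left is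
`{0}`, and `k = 0`.
-/

/-- Triangle inequality for `(∑ a j * y j ^ q j) ^ (1 / p)` when `0 < q j ≤ p` and `1 ≤ p`. -/
lemma anisotropic_minkowski {ι : Type*} [Fintype ι] (a q u v : ι → ℝ) (p : ℝ) (hp : 1 ≤ p)
    (ha : ∀ j, 0 < a j) (hq : ∀ j, 0 < q j) (hqp : ∀ j, q j ≤ p)
    (hu : ∀ j, 0 ≤ u j) (hv : ∀ j, 0 ≤ v j) :
    (∑ j, a j * (u j + v j) ^ q j) ^ (1 / p) ≤
      (∑ j, a j * u j ^ q j) ^ (1 / p) + (∑ j, a j * v j ^ q j) ^ (1 / p) := by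
  have hp0 : 0 < p := by linarith
  have key : ∀ j (s : ℝ), 0 ≤ s → (a j ^ (1 / p) * s ^ (q j / p)) ^ p = a j * s ^ q j := by
    intro j s hs
    have := ha j
    rw [Real.mul_rpow (by positivity) (by positivity), ← Real.rpow_mul this.le,
      ← Real.rpow_mul hs, one_div_mul_cancel hp0.ne', div_mul_cancel₀ _ hp0.ne', Real.rpow_one]
  have hnn : ∀ j (s : ℝ), 0 ≤ s → 0 ≤ a j ^ (1 / p) * s ^ (q j / p) := by
    intro j s hs
    have := ha j
    positivity
  have h := Real.Lp_add_le_of_nonneg (s := Finset.univ)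
    (f := fun j => a j ^ (1 / p) * u j ^ (q j / p))
    (g := fun j => a j ^ (1 / p) * v j ^ (q j / p)) hp
    (fun j _ => hnn j _ (hu j)) (fun j _ => hnn j _ (hv j))
  simp only [key _ _ (hu _), key _ _ (hv _)] at h
  refine le_trans ?_ h
  apply Real.rpow_le_rpow _ _ (by positivity)
  · exact Finset.sum_nonneg fun j _ =>
      mul_nonneg (ha j).le (Real.rpow_nonneg (add_nonneg (hu j) (hv j)) _)
  refine Finset.sum_le_sum fun j _ => ?_
  rw [← key j _ (add_nonneg (hu j) (hv j))]
  apply Real.rpow_le_rpow (hnn j _ (add_nonneg (hu j) (hv j))) _ hp0.le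
  rw [← mul_add]
  have := ha j
  exact mul_le_mul_of_nonneg_left (Real.rpow_add_le_add_rpow (hu j) (hv j)
    (div_pos (hq j) hp0).le ((div_le_one hp0).2 (hqp j))) (by positivity)

/-- The set `{x ∈ ℝ^d : ∑ a_j |x_j|^{2b_j} ≤ ((m - C)_+)^{p}}` is contained in the union of
the unit cubes `Q_k` over the lattice points `k ∈ ℤ^d` with `∑ a_j |k_j|^{2b_j} ≤ m^{p}`,
where `p = max{1, 2b_1, …, 2b_d}` and `C = (∑ a_j 2^{-2b_j})^{1/p}`. -/
theorem ellipsoid_subset_union_cubes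
    (d : ℕ) (hd : 0 < d) (a b : Fin d → ℝ)
    (ha : ∀ j, 0 < a j) (hb : ∀ j, 0 < b j) (m : ℕ)
    (p C : ℝ) (hp : p = max 1 (⨆ j, 2 * b j))
    (hC : C = (∑ j, a j * (2 : ℝ) ^ (-(2 * b j))) ^ (1 / p)) :
    {x : Fin d → ℝ | ∑ j, a j * |x j| ^ (2 * b j) ≤ (max ((m : ℝ) - C) 0) ^ p} ⊆
      ⋃ k ∈ {k : Fin d → ℤ | ∑ j, a j * |(k j : ℝ)| ^ (2 * b j) ≤ (m : ℝ) ^ p},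
        {x : Fin d → ℝ | ∀ j, |x j - (k j : ℝ)| ≤ 1 / 2} := by
  intro x hx
  simp only [Set.mem_setOf_eq] at hx
  have hp1 : 1 ≤ p := hp ▸ le_max_left _ _
  have hp0 : 0 < p := by linarith
  have hbp : ∀ j, 2 * b j ≤ p := fun j => by
    rw [hp]
    exact (le_ciSup (f := fun j => 2 * b j) (Set.finite_range _).bddAbove j).trans
      (le_max_right _ _)
  have hb2 : ∀ j, 0 < 2 * b j := fun j => by linarith [hb j]
  have hterm : ∀ (y : Fin d → ℝ) j, 0 ≤ a j * |y j| ^ (2 * b j) := fun y j =>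
    mul_nonneg (ha j).le (Real.rpow_nonneg (abs_nonneg _) _)
  simp only [Set.mem_iUnion, Set.mem_setOf_eq, exists_prop]
  refine ⟨fun j => round (x j), ?_, fun j => abs_sub_round _⟩
  rcases le_or_gt C m with hCm | hCm
  · rw [max_eq_left (by linarith)] at hx
    have hround : ∀ j, |((round (x j) : ℤ) : ℝ)| ≤ |x j| + 1 / 2 := fun j => by
      have h1 := abs_sub_round (x j)
      have h2 := abs_sub_abs_le_abs_sub ((round (x j) : ℤ) : ℝ) (x j)
      rw [abs_sub_comm] at h2
      linarith
    have hmink := anisotropic_minkowski a (fun j => 2 * b j) (fun j => |x j|) (fun _ => 1 / 2) p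
      hp1 ha hb2 hbp (fun j => abs_nonneg _) (fun _ => by norm_num)
    have hhalf : ∀ j, (1 / 2 : ℝ) ^ (2 * b j) = 2 ^ (-(2 * b j)) := fun j => by
      rw [one_div, Real.inv_rpow (by norm_num), Real.rpow_neg (by norm_num)]
    simp only [hhalf, ← hC] at hmink
    have hxn : (∑ j, a j * |x j| ^ (2 * b j)) ^ (1 / p) ≤ m - C := by
      rw [one_div]
      exact (Real.rpow_inv_le_iff_of_pos (Finset.sum_nonneg fun j _ => hterm x j)
        (by linarith) hp0).2 hx
    have hsum : ∑ j, a j * (|x j| + 1 / 2) ^ (2 * b j) ≤ (m : ℝ) ^ p := by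
      refine (Real.rpow_inv_le_iff_of_pos (Finset.sum_nonneg fun j _ =>
        mul_nonneg (ha j).le (by positivity)) (by positivity) hp0).1 ?_
      rw [← one_div]
      linarith
    refine le_trans (Finset.sum_le_sum fun j _ => ?_) hsum
    exact mul_le_mul_of_nonneg_left
      (Real.rpow_le_rpow (abs_nonneg _) (hround j) (hb2 j).le) (ha j).le
  · rw [max_eq_right (by linarith), Real.zero_rpow hp0.ne'] at hx
    have hx0 : ∀ j, x j = 0 := fun j => by
      have h := (Finset.sum_eq_zero_iff_of_nonneg fun j _ => hterm x j).1
        (le_antisymm hx (Finset.sum_nonneg fun j _ => hterm x j)) j (Finset.mem_univ j)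
      rcases mul_eq_zero.1 h with h | h
      · exact absurd h (ha j).ne'
      · exact abs_eq_zero.1 ((Real.rpow_eq_zero (abs_nonneg _) (hb2 j).ne').1 h)
    have hz : ∑ j, a j * |((round (x j) : ℤ) : ℝ)| ^ (2 * b j) = 0 :=
      Finset.sum_eq_zero fun j _ => by simp [hx0 j, Real.zero_rpow (hb2 j).ne', (hb j).ne']
    rw [hz]
    positivity
end

section
/- Let d ∈ ℕ, let a_1,…,a_d and b_1,…,b_d be positive real numbers, and set p_d = max{1, 2b_1, …, 2b_d}, C_{a,b,d} = (Σ_{j=1}^d a_j 2^{-2b_j})^{1/p_d}. For m ∈ ℕ, let C(m,a,b,d) = #{k ∈ ℤ^d : Σ_{j=1}^d a_j |k_j|^{2b_j} ≤ m^{p_d}}. Then ((m - C_{a,b,d})_+)^{p_d · Σ_{j=1}^d 1/(2b_j)} · vol(B_{a,2b}^d) ≤ C(m,a,b,d) ≤ (m + C_{a,b,d})^{p_d · Σ_{j=1}^d 1/(2b_j)} · vol(B_{a,2b}^d), where (u)_+ = max{u, 0}. -/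
open MeasureTheory

/-!
With `p = max 1 (max_j 2 b_j)`, the gauge `f x = (∑ a_j |x_j| ^ (2 b_j)) ^ (1 / p)` is subadditive:
`t ↦ t ^ (2 b_j / p)` is subadditive because `2 b_j ≤ p`, and then Minkowski's inequality in `ℓ^p`
applies because `p ≥ 1`. Moreover `f ≤ C` on the cube `[-1/2, 1/2]^d`. Hence, if `U` is the set of
points whose coordinatewise rounding is one of the counted lattice points, then
`{f ≤ m - C} ⊆ U ⊆ {f ≤ m + C}`. The set `U` is a disjoint union of unit cubes, so its volume is the
lattice point count, while a diagonal change of variables gives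
`vol {f ≤ r} = r ^ (p ∑ 1 / (2 b_j)) * vol {f ≤ 1}`.
-/

/-- The triangle inequality for the gauge `(∑ a_j |x_j| ^ (2 b_j)) ^ (1 / p)`. -/
lemma ellipsoidGauge_add_le {d : ℕ} {a b : Fin d → ℝ} (ha : ∀ j, 0 < a j) (hb : ∀ j, 0 < b j) {p : ℝ}
    (hp1 : 1 ≤ p) (hbp : ∀ j, 2 * b j ≤ p) (x y : Fin d → ℝ) :
    (∑ j, a j * |x j + y j| ^ (2 * b j)) ^ (1 / p) ≤
      (∑ j, a j * |x j| ^ (2 * b j)) ^ (1 / p) + (∑ j, a j * |y j| ^ (2 * b j)) ^ (1 / p) := by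
  have hp0 : 0 < p := by linarith
  have key : ∀ (j : Fin d) (t : ℝ), 0 ≤ t →
      (a j ^ (1 / p) * t ^ (2 * b j / p)) ^ p = a j * t ^ (2 * b j) := by
    intro j t ht
    have := (ha j).le
    rw [Real.mul_rpow (by positivity) (by positivity), ← Real.rpow_mul this, ← Real.rpow_mul ht,
      one_div_mul_cancel hp0.ne', Real.rpow_one, div_mul_cancel₀ _ hp0.ne']
  have hnn : ∀ (j : Fin d) (t : ℝ), 0 ≤ t → 0 ≤ a j ^ (1 / p) * t ^ (2 * b j / p) := by
    intro j t ht
    have := (ha j).le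
    positivity
  have mink := Real.Lp_add_le_of_nonneg Finset.univ hp1
    (f := fun j => a j ^ (1 / p) * |x j| ^ (2 * b j / p))
    (g := fun j => a j ^ (1 / p) * |y j| ^ (2 * b j / p))
    (fun j _ => hnn j _ (abs_nonneg _)) (fun j _ => hnn j _ (abs_nonneg _))
  simp only [key _ _ (abs_nonneg _)] at mink
  refine le_trans ?_ mink
  refine Real.rpow_le_rpow
    (Finset.sum_nonneg fun j _ => mul_nonneg (ha j).le (Real.rpow_nonneg (abs_nonneg _) _)) ?_
    (by positivity)
  refine Finset.sum_le_sum fun j _ => ?_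
  rw [← key j _ (abs_nonneg (x j + y j)), ← mul_add]
  refine Real.rpow_le_rpow (hnn j _ (abs_nonneg _)) ?_ hp0.le
  have hbj := hb j
  refine mul_le_mul_of_nonneg_left ?_ (Real.rpow_nonneg (ha j).le _)
  calc |x j + y j| ^ (2 * b j / p) ≤ (|x j| + |y j|) ^ (2 * b j / p) :=
        Real.rpow_le_rpow (abs_nonneg _) (abs_add_le _ _) (by positivity)
    _ ≤ _ := Real.rpow_add_le_add_rpow (abs_nonneg _) (abs_nonneg _) (by positivity)
        ((div_le_one hp0).2 (hbp j))

/-- Generalized ellipsoids are bounded. -/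
lemma ellipsoid_bounded {d : ℕ} {a b : Fin d → ℝ} (ha : ∀ j, 0 < a j) (hb : ∀ j, 0 < b j)
    (R : ℝ) : ∃ M : ℕ, ∀ x : Fin d → ℝ, ∑ j, a j * |x j| ^ (2 * b j) ≤ R → ∀ j, |x j| ≤ M := by
  obtain ⟨M, hM⟩ := exists_nat_ge (∑ j, (|R| / a j) ^ (1 / (2 * b j)))
  refine ⟨M, fun x hx j => le_trans ?_ hM⟩
  have hnn : ∀ i, 0 ≤ a i * |x i| ^ (2 * b i) := fun i =>
    mul_nonneg (ha i).le (Real.rpow_nonneg (abs_nonneg _) _)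
  have h1 : a j * |x j| ^ (2 * b j) ≤ |R| :=
    ((Finset.single_le_sum (fun i _ => hnn i) (Finset.mem_univ j)).trans hx).trans (le_abs_self R)
  have h2 : |x j| ^ (2 * b j) ≤ |R| / a j := by
    rw [le_div_iff₀ (ha j)]; linarith
  have hbj := hb j
  have h3 : |x j| ≤ (|R| / a j) ^ (1 / (2 * b j)) := by
    have := Real.rpow_le_rpow (by positivity) h2 (show 0 ≤ 1 / (2 * b j) by positivity)
    rwa [← Real.rpow_mul (abs_nonneg _), mul_one_div_cancel (by positivity), Real.rpow_one] at this
  refine h3.trans (Finset.single_le_sum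
    (f := fun j => (|R| / a j) ^ (1 / (2 * b j))) (fun i _ => ?_) (Finset.mem_univ j))
  have := (ha i).le
  positivity

lemma volume_ellipsoid_ne_top {d : ℕ} {a b : Fin d → ℝ} (ha : ∀ j, 0 < a j) (hb : ∀ j, 0 < b j)
    (R : ℝ) : volume {x : Fin d → ℝ | ∑ j, a j * |x j| ^ (2 * b j) ≤ R} ≠ ⊤ := by
  obtain ⟨M, hM⟩ := ellipsoid_bounded ha hb R
  refine ne_top_of_le_ne_top (isCompact_Icc (a := fun _ : Fin d => -(M : ℝ))
    (b := fun _ => (M : ℝ))).measure_lt_top.ne (measure_mono fun x hx => ?_)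
  exact ⟨fun j => (abs_le.1 (hM x hx j)).1, fun j => (abs_le.1 (hM x hx j)).2⟩

lemma lattice_finite {d : ℕ} {a b : Fin d → ℝ} (ha : ∀ j, 0 < a j) (hb : ∀ j, 0 < b j)
    (R : ℝ) : {k : Fin d → ℤ | ∑ j, a j * |(k j : ℝ)| ^ (2 * b j) ≤ R}.Finite := by
  obtain ⟨M, hM⟩ := ellipsoid_bounded ha hb R
  refine (Set.finite_Icc (fun _ : Fin d => -(M : ℤ)) (fun _ => (M : ℤ))).subset fun k hk => ?_
  have h : ∀ j, |k j| ≤ (M : ℤ) := fun j => by exact_mod_cast hM (fun j => (k j : ℝ)) hk j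
  exact ⟨fun j => (abs_le.1 (h j)).1, fun j => (abs_le.1 (h j)).2⟩

/-- Anisotropic scaling of the volume of the sublevel sets. -/
lemma volume_ellipsoid_scale {d : ℕ} {a b : Fin d → ℝ} (hb : ∀ j, 0 < b j) (p : ℝ) {r : ℝ}
    (hr : 0 < r) :
    (volume {x : Fin d → ℝ | ∑ j, a j * |x j| ^ (2 * b j) ≤ r ^ p}).toReal =
      r ^ (p * ∑ j, 1 / (2 * b j)) *
        (volume {x : Fin d → ℝ | ∑ j, a j * |x j| ^ (2 * b j) ≤ 1}).toReal := by
  set D : Fin d → ℝ := fun j => r ^ (-(p / (2 * b j))) with hD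
  have hDpos : ∀ j, 0 < D j := fun j => Real.rpow_pos_of_pos hr _
  have hdet : LinearMap.det (Matrix.toLin' (Matrix.diagonal D)) =
      (r ^ (p * ∑ j, 1 / (2 * b j)))⁻¹ := by
    rw [LinearMap.det_toLin', Matrix.det_diagonal, ← Real.rpow_neg hr.le, Finset.mul_sum,
      ← Finset.sum_neg_distrib, Real.rpow_sum_of_pos hr]
    exact Finset.prod_congr rfl fun j _ => by rw [hD, mul_one_div]
  have hrpos : 0 < r ^ (p * ∑ j, 1 / (2 * b j)) := Real.rpow_pos_of_pos hr _
  have hpre : {x : Fin d → ℝ | ∑ j, a j * |x j| ^ (2 * b j) ≤ r ^ p} =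
      Matrix.toLin' (Matrix.diagonal D) ⁻¹'
        {x : Fin d → ℝ | ∑ j, a j * |x j| ^ (2 * b j) ≤ 1} := by
    ext x
    have hrp : 0 < r ^ p := Real.rpow_pos_of_pos hr _
    have hsum : ∑ j, a j * |D j * x j| ^ (2 * b j) =
        (∑ j, a j * |x j| ^ (2 * b j)) / r ^ p := by
      rw [Finset.sum_div]
      refine Finset.sum_congr rfl fun j _ => ?_
      have hbj := hb j
      rw [abs_mul, abs_of_pos (hDpos j), Real.mul_rpow (hDpos j).le (abs_nonneg _), hD,
        ← Real.rpow_mul hr.le, neg_mul, div_mul_cancel₀ _ (by positivity), Real.rpow_neg hr.le]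
      field_simp
    simp only [Set.mem_ofPred_eq, Set.mem_preimage, Matrix.toLin'_apply, Matrix.mulVec_diagonal,
      hsum, div_le_one hrp]
  rw [hpre, Measure.addHaar_preimage_linearMap _ (by rw [hdet]; positivity), hdet, inv_inv,
    ENNReal.toReal_mul, abs_of_pos hrpos, ENNReal.toReal_ofReal hrpos.le]

/-- The points rounding to an element of a finite set of lattice points form a set whose volume is
the number of these lattice points. -/
lemma volume_round_preimage {d : ℕ} {K : Set (Fin d → ℤ)} (hK : K.Finite) :
    volume {x : Fin d → ℝ | (fun j => round (x j)) ∈ K} = K.ncard := by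
  have hcube : ∀ k : Fin d → ℤ, {x : Fin d → ℝ | (fun j => round (x j)) = k} =
      Set.univ.pi fun j => Set.Ico ((k j : ℝ) - 1 / 2) (k j + 1 / 2) := by
    intro k
    ext x
    simp only [Set.mem_ofPred_eq, funext_iff, Set.mem_univ_pi, round_eq, Int.floor_eq_iff,
      Set.mem_Ico]
    refine forall_congr' fun j => ?_
    constructor <;> rintro ⟨h1, h2⟩ <;> constructor <;> linarith
  have hU : {x : Fin d → ℝ | (fun j => round (x j)) ∈ K} =
      ⋃ k ∈ hK.toFinset, {x : Fin d → ℝ | (fun j => round (x j)) = k} := by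
    ext x
    simp
  rw [hU, measure_biUnion_finset]
  · have : ∀ k : Fin d → ℤ, volume {x : Fin d → ℝ | (fun j => round (x j)) = k} = 1 := by
      intro k
      rw [hcube, Real.volume_pi_Ico]
      norm_num
    simp [this, Set.ncard_eq_toFinset_card K hK]
  · intro k _ l _ hkl
    exact Set.disjoint_left.2 fun x hx hy => hkl (hx.symm.trans hy)
  · intro k _
    rw [hcube]
    exact MeasurableSet.univ_pi fun j => measurableSet_Ico

/-- Two-sided estimate for the lattice point count
`C(m,a,b,d) = #{k ∈ ℤ^d : ∑ a_j |k_j|^{2b_j} ≤ m^p}`: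
`((m - C)_+)^{p·∑ 1/(2b_j)} · vol(B_{a,2b}^d) ≤ C(m,a,b,d) ≤ (m + C)^{p·∑ 1/(2b_j)} · vol(B_{a,2b}^d)`,
where `p = max{1, 2b_1, …, 2b_d}` and `C = (∑ a_j 2^{-2b_j})^{1/p}`. -/
theorem lattice_count_bounds
    (d : ℕ) (hd : 0 < d) (a b : Fin d → ℝ)
    (ha : ∀ j, 0 < a j) (hb : ∀ j, 0 < b j) (m : ℕ)
    (p C : ℝ) (hp : p = max 1 (⨆ j, 2 * b j))
    (hC : C = (∑ j, a j * (2 : ℝ) ^ (-(2 * b j))) ^ (1 / p)) :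
    (max ((m : ℝ) - C) 0) ^ (p * ∑ j, 1 / (2 * b j)) *
        (volume {x : Fin d → ℝ | ∑ j, a j * |x j| ^ (2 * b j) ≤ 1}).toReal ≤
      (({k : Fin d → ℤ | ∑ j, a j * |(k j : ℝ)| ^ (2 * b j) ≤ (m : ℝ) ^ p}).ncard : ℝ) ∧
    (({k : Fin d → ℤ | ∑ j, a j * |(k j : ℝ)| ^ (2 * b j) ≤ (m : ℝ) ^ p}).ncard : ℝ) ≤
      ((m : ℝ) + C) ^ (p * ∑ j, 1 / (2 * b j)) *
        (volume {x : Fin d → ℝ | ∑ j, a j * |x j| ^ (2 * b j) ≤ 1}).toReal := by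
  have hp1 : 1 ≤ p := hp ▸ le_max_left _ _
  have hp0 : 0 < p := by linarith
  have hbp : ∀ j, 2 * b j ≤ p := fun j =>
    (le_ciSup (Set.finite_range fun j => 2 * b j).bddAbove j).trans (hp ▸ le_max_right _ _)
  have hnn : ∀ x : Fin d → ℝ, 0 ≤ ∑ j, a j * |x j| ^ (2 * b j) := fun x =>
    Finset.sum_nonneg fun j _ => mul_nonneg (ha j).le (Real.rpow_nonneg (abs_nonneg _) _)
  have hC0 : 0 < C := by
    rw [hC]
    exact Real.rpow_pos_of_pos (Finset.sum_pos
      (fun j _ => mul_pos (ha j) (Real.rpow_pos_of_pos two_pos _)) ⟨⟨0, hd⟩, Finset.mem_univ _⟩) _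
  have hcube : ∀ y : Fin d → ℝ, (∀ j, |y j| ≤ 1 / 2) →
      (∑ j, a j * |y j| ^ (2 * b j)) ^ (1 / p) ≤ C := by
    intro y hy
    rw [hC]
    refine Real.rpow_le_rpow (hnn y) (Finset.sum_le_sum fun j _ => ?_) (by positivity)
    refine mul_le_mul_of_nonneg_left ?_ (ha j).le
    have hbj := hb j
    rw [Real.rpow_neg two_pos.le, ← Real.inv_rpow two_pos.le]
    exact Real.rpow_le_rpow (abs_nonneg _) (by simpa using hy j) (by positivity)
  have hlevel : ∀ (x : Fin d → ℝ) (r : ℝ), 0 ≤ r →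
      (∑ j, a j * |x j| ^ (2 * b j) ≤ r ^ p ↔
        (∑ j, a j * |x j| ^ (2 * b j)) ^ (1 / p) ≤ r) := by
    intro x r hr
    rw [one_div, Real.rpow_inv_le_iff_of_pos (hnn x) hr hp0]
  set K : Set (Fin d → ℤ) := {k | ∑ j, a j * |(k j : ℝ)| ^ (2 * b j) ≤ (m : ℝ) ^ p} with hKdef
  have hK : K.Finite := lattice_finite ha hb _
  have hvol := volume_round_preimage hK
  have hcard : (K.ncard : ℝ) =
      (volume {x : Fin d → ℝ | (fun j => round (x j)) ∈ K}).toReal := by simp [hvol]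
  rw [hcard]
  constructor
  · rcases le_or_gt ((m : ℝ) - C) 0 with h | h
    · have hs : 0 < ∑ j, 1 / (2 * b j) :=
        Finset.sum_pos (fun j _ => by have := hb j; positivity) ⟨⟨0, hd⟩, Finset.mem_univ _⟩
      rw [max_eq_right h, Real.zero_rpow (by positivity), zero_mul]
      exact ENNReal.toReal_nonneg
    · rw [max_eq_left h.le, ← volume_ellipsoid_scale hb p h]
      refine ENNReal.toReal_mono (by simp [hvol]) (measure_mono fun x hx => ?_)
      have hx' := (hlevel x _ h.le).1 hx
      refine (hlevel (fun j => (round (x j) : ℝ)) m (by positivity)).2 ?_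
      have h1 := ellipsoidGauge_add_le ha hb hp1 hbp x (fun j => (round (x j) : ℝ) - x j)
      have h2 := hcube (fun j => (round (x j) : ℝ) - x j)
        fun j => by rw [abs_sub_comm]; exact abs_sub_round _
      simp only [add_sub_cancel] at h1
      linarith
  · have h : 0 < (m : ℝ) + C := by positivity
    rw [← volume_ellipsoid_scale hb p h]
    refine ENNReal.toReal_mono (volume_ellipsoid_ne_top ha hb _) (measure_mono fun x hx => ?_)
    have hx' := (hlevel (fun j => (round (x j) : ℝ)) m (by positivity)).1 hx
    refine (hlevel x _ h.le).2 ?_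
    have h1 := ellipsoidGauge_add_le ha hb hp1 hbp (fun j => (round (x j) : ℝ))
      (fun j => x j - round (x j))
    have h2 := hcube (fun j => x j - round (x j)) fun j => abs_sub_round _
    simp only [add_sub_cancel] at h1
    linarith
end

section
/- Let d ∈ ℕ and let a_1,…,a_d and b_1,…,b_d be positive real numbers. Then lim_{T→∞} T^{-Σ_{j=1}^d 1/(2b_j)} · #{k ∈ ℤ^d : Σ_{j=1}^d a_j |k_j|^{2b_j} ≤ T} = vol(B_{a,2b}^d), where B_{a,2b}^d = {x ∈ ℝ^d : Σ_{j=1}^d a_j |x_j|^{2b_j} ≤ 1}. -/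
/-!
Write `Q x = ∑ a_j |x_j|^{2b_j}`. The dilation `δ_T : x_j ↦ T^{1/(2b_j)} x_j` satisfies
`Q (δ_T x) = T * Q x` and multiplies volume by `T^{∑ 1/(2b_j)}`. Attaching to each lattice point `k`
with `Q k ≤ T` the unit cube with lower corner `k`, and pulling back by `δ_T`, the normalized count
becomes the volume of `A_T = {x | Q (corner T x) ≤ 1}`, where `corner T x = δ_T⁻¹ ⌊δ_T x⌋`
(`normalized_count_eq`). As `T → ∞`, `corner T x → x`, so by continuity of `Q` the indicator of `A_T`
converges to that of `{Q ≤ 1}` at every point with `Q x ≠ 1`. The level set `{Q = 1}` is null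
(`volume_ellGauge_eq_one`), and for `T ≥ 1` all `A_T` lie in a fixed box, so dominated convergence
gives the limit.
-/

open MeasureTheory Filter

/-- The function `x ↦ ∑ a_j |x_j|^{2b_j}` whose sublevel sets are the generalized ellipsoids. -/
noncomputable def ellGauge {d : ℕ} (a b : Fin d → ℝ) (x : Fin d → ℝ) : ℝ :=
  ∑ j, a j * |x j| ^ (2 * b j)

lemma continuous_ellGauge {d : ℕ} {a b : Fin d → ℝ} (hb : ∀ j, 0 < b j) :
    Continuous (ellGauge a b) := by
  unfold ellGauge
  refine continuous_finsetSum _ fun j _ => continuous_const.mul ?_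
  exact ((continuous_apply j).abs).rpow_const fun x => Or.inr (by linarith [hb j])

lemma abs_le_of_ellGauge_le {d : ℕ} {a b : Fin d → ℝ} (ha : ∀ j, 0 < a j) (hb : ∀ j, 0 < b j)
    {x : Fin d → ℝ} {T : ℝ} (hx : ellGauge a b x ≤ T) (j : Fin d) :
    |x j| ≤ (T / a j) ^ (2 * b j)⁻¹ := by
  have h1 : a j * |x j| ^ (2 * b j) ≤ T := by
    refine le_trans ?_ hx
    refine Finset.single_le_sum (f := fun j => a j * |x j| ^ (2 * b j)) (fun i _ => ?_)
      (Finset.mem_univ j)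
    have := ha i
    positivity
  have h2 : |x j| ^ (2 * b j) ≤ T / a j := by
    rw [le_div_iff₀ (ha j)]
    linarith
  have hb' : 0 < 2 * b j := by linarith [hb j]
  rwa [← Real.rpow_le_rpow_iff (by positivity)
    (Real.rpow_nonneg (le_trans (by positivity) h2) _) hb', Real.rpow_inv_rpow
    (le_trans (by positivity) h2) hb'.ne']

/-- `ellGauge` is homogeneous for the anisotropic dilations `x_j ↦ T^{1/(2b_j)} x_j`. -/
lemma ellGauge_dilation {d : ℕ} {a b : Fin d → ℝ} (hb : ∀ j, 0 < b j) {T : ℝ} (hT : 0 < T)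
    (x : Fin d → ℝ) :
    ellGauge a b (fun j => T ^ (1 / (2 * b j)) * x j) = T * ellGauge a b x := by
  unfold ellGauge
  rw [Finset.mul_sum]
  refine Finset.sum_congr rfl fun j _ => ?_
  have hb' : 2 * b j ≠ 0 := by linarith [hb j]
  rw [abs_mul, abs_of_pos (Real.rpow_pos_of_pos hT _), Real.mul_rpow (by positivity) (abs_nonneg _),
    ← Real.rpow_mul hT.le, one_div_mul_cancel hb', Real.rpow_one]
  ring

lemma finite_ellGauge_le {d : ℕ} {a b : Fin d → ℝ} (ha : ∀ j, 0 < a j) (hb : ∀ j, 0 < b j) (T : ℝ) :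
    {k : Fin d → ℤ | ellGauge a b (fun j => (k j : ℝ)) ≤ T}.Finite := by
  refine (Set.Finite.pi' fun j : Fin d => Set.finite_Icc (-⌈(T / a j) ^ (2 * b j)⁻¹⌉)
    ⌈(T / a j) ^ (2 * b j)⁻¹⌉).subset fun k hk j => ?_
  have h := (abs_le_of_ellGauge_le ha hb hk j).trans (Int.le_ceil _)
  rw [← Int.cast_abs, Int.cast_le] at h
  exact abs_le.mp h

/-- Replacing each lattice point by the unit cube based at it turns counting into volume. -/
lemma volume_floor_mem {d : ℕ} {K : Set (Fin d → ℤ)} (hK : K.Finite) :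
    volume {x : Fin d → ℝ | (fun j => ⌊x j⌋) ∈ K} = K.ncard := by
  have hset : {x : Fin d → ℝ | (fun j => ⌊x j⌋) ∈ K} =
      ⋃ k ∈ hK.toFinset, Set.pi Set.univ fun j => Set.Ico (k j : ℝ) (k j + 1) := by
    ext x
    simp only [Set.mem_ofPred_eq, Set.Finite.mem_toFinset, Set.mem_iUnion, Set.mem_pi,
      Set.mem_univ, forall_true_left, Set.mem_Ico, exists_prop, ← Int.floor_eq_iff]
    constructor
    · exact fun h => ⟨_, h, fun j => rfl⟩
    · rintro ⟨k, hk, h⟩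
      rwa [show (fun j => ⌊x j⌋) = k from funext h]
  rw [hset, measure_biUnion_finset]
  · simp [Real.volume_pi_Ico, Set.ncard_eq_toFinset_card K hK]
  · intro k _ l _ hkl
    refine Set.disjoint_left.mpr fun x hx hy => hkl (funext fun j => ?_)
    rw [← Int.floor_eq_iff.mpr (hx j trivial), ← Int.floor_eq_iff.mpr (hy j trivial)]
  · exact fun k _ => MeasurableSet.univ_pi fun j => measurableSet_Ico

lemma volume_preimage_diagonal {d : ℕ} {t : Fin d → ℝ} (ht : ∀ j, 0 < t j)
    {s : Set (Fin d → ℝ)} (hs : MeasurableSet s) :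
    volume s = ENNReal.ofReal (∏ j, t j) * volume {x : Fin d → ℝ | (fun j => t j * x j) ∈ s} := by
  have hdet : (Matrix.diagonal t).det = ∏ j, t j := Matrix.det_diagonal
  have hpos : 0 < ∏ j, t j := Finset.prod_pos fun j _ => ht j
  have h := Real.smul_map_diagonal_volume_pi (D := t) (by rw [hdet]; exact hpos.ne')
  have hfun : ∀ x, Matrix.toLin' (Matrix.diagonal t) x = fun j => t j * x j := fun x => by
    ext j; simp [Matrix.mulVec_diagonal]
  conv_lhs => rw [← h]
  rw [Measure.smul_apply, Measure.map_apply (LinearMap.continuous_of_finiteDimensional _).measurable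
    hs, hdet, abs_of_pos hpos, smul_eq_mul]
  congr 2 with x
  simp only [Set.mem_preimage, Set.mem_ofPred_eq, hfun]

/-- Only countably many level sets of `ellGauge` have positive measure, while the dilations identify
all the positive levels up to a nonzero factor; hence they are all null. -/
lemma volume_ellGauge_eq_one {d : ℕ} {a b : Fin d → ℝ} (hb : ∀ j, 0 < b j) :
    volume {x : Fin d → ℝ | ellGauge a b x = 1} = 0 := by
  have hm : Measurable (ellGauge a b) := (continuous_ellGauge hb).measurable
  have hc := Measure.countable_meas_level_set_pos (μ := (volume : Measure (Fin d → ℝ))) hm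
  obtain ⟨r, hr, hr'⟩ := (hc.dense_compl ℝ).inter_open_nonempty _ isOpen_Ioi
    (Set.nonempty_Ioi (a := (0 : ℝ)))
  have hr0 : (0 : ℝ) < r := hr
  have h0 : volume (ellGauge a b ⁻¹' {r}) = 0 := nonpos_iff_eq_zero.mp (not_lt.mp hr')
  rw [volume_preimage_diagonal (t := fun j => r ^ (1 / (2 * b j)))
    (fun j => Real.rpow_pos_of_pos hr0 _) (hm (measurableSet_singleton r)), mul_eq_zero] at h0
  have hpos : 0 < ∏ j, r ^ (1 / (2 * b j)) := Finset.prod_pos fun j _ => Real.rpow_pos_of_pos hr0 _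
  have h1 := h0.resolve_left (by simpa using hpos)
  convert! h1 using 2
  ext x
  simp only [Set.mem_preimage, Set.mem_ofPred_eq, Set.mem_singleton_iff, ellGauge_dilation hb hr0]
  constructor
  · intro h; rw [h, mul_one]
  · exact fun h => mul_left_cancel₀ hr0.ne' (h.trans (mul_one r).symm)

/-- The point of the rescaled lattice `∏ t_j⁻¹ ℤ` at the lower corner of the cell containing `x`,
where `t_j = T^{1/(2b_j)}`. -/
noncomputable def corner {d : ℕ} (b : Fin d → ℝ) (T : ℝ) (x : Fin d → ℝ) : Fin d → ℝ :=
  fun j => ⌊T ^ (1 / (2 * b j)) * x j⌋ / T ^ (1 / (2 * b j))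

lemma abs_sub_corner_le {d : ℕ} (b : Fin d → ℝ) {T : ℝ} (hT : 0 < T) (x : Fin d → ℝ) (j : Fin d) :
    |x j - corner b T x j| ≤ (T ^ (1 / (2 * b j)))⁻¹ := by
  have ht : 0 < T ^ (1 / (2 * b j)) := Real.rpow_pos_of_pos hT _
  have h : x j - corner b T x j = Int.fract (T ^ (1 / (2 * b j)) * x j) / T ^ (1 / (2 * b j)) := by
    unfold corner Int.fract
    field_simp
  rw [h, abs_of_nonneg (div_nonneg (Int.fract_nonneg _) ht.le), ← one_div]
  gcongr
  exact (Int.fract_lt_one _).le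

lemma tendsto_corner {d : ℕ} {b : Fin d → ℝ} (hb : ∀ j, 0 < b j) (x : Fin d → ℝ) :
    Tendsto (fun T => corner b T x) atTop (nhds x) := by
  refine tendsto_pi_nhds.mpr fun j => ?_
  have hlim : Tendsto (fun T : ℝ => (T ^ (1 / (2 * b j)))⁻¹) atTop (nhds 0) :=
    (tendsto_rpow_atTop (by have := hb j; positivity)).inv_tendsto_atTop
  rw [tendsto_iff_norm_sub_tendsto_zero]
  refine squeeze_zero' (Eventually.of_forall fun _ => norm_nonneg _) ?_ hlim
  filter_upwards [eventually_gt_atTop 0] with T hT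
  rw [Real.norm_eq_abs, abs_sub_comm]
  exact abs_sub_corner_le b hT x j

lemma measurable_corner {d : ℕ} (b : Fin d → ℝ) (T : ℝ) : Measurable (corner b T) := by
  refine measurable_pi_lambda _ fun j => ?_
  unfold corner
  have : Measurable fun x : Fin d → ℝ => ⌊T ^ (1 / (2 * b j)) * x j⌋ :=
    ((measurable_pi_apply j).const_mul _).floor
  exact (measurable_from_top.comp this).div_const _

/-- The normalized lattice count is the volume of a union of small cells. -/
lemma normalized_count_eq {d : ℕ} {a b : Fin d → ℝ} (ha : ∀ j, 0 < a j) (hb : ∀ j, 0 < b j)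
    {T : ℝ} (hT : 0 < T) :
    T ^ (-(∑ j, 1 / (2 * b j))) *
      (({k : Fin d → ℤ | ellGauge a b (fun j => (k j : ℝ)) ≤ T}).ncard : ℝ) =
    (volume {x : Fin d → ℝ | ellGauge a b (corner b T x) ≤ 1}).toReal := by
  set K := {k : Fin d → ℤ | ellGauge a b (fun j => (k j : ℝ)) ≤ T} with hKdef
  have hK : K.Finite := finite_ellGauge_le ha hb T
  have ht : ∀ j, 0 < T ^ (1 / (2 * b j)) := fun j => Real.rpow_pos_of_pos hT _
  have hmeas : MeasurableSet {x : Fin d → ℝ | (fun j => ⌊x j⌋) ∈ K} := by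
    have : Measurable fun x : Fin d → ℝ => fun j => ⌊x j⌋ :=
      measurable_pi_lambda _ fun j => (measurable_pi_apply j).floor
    exact this hK.measurableSet
  have hset : {x : Fin d → ℝ | ellGauge a b (corner b T x) ≤ 1} =
      {x | (fun j => T ^ (1 / (2 * b j)) * x j) ∈ {x : Fin d → ℝ | (fun j => ⌊x j⌋) ∈ K}} := by
    ext x
    have h := ellGauge_dilation (a := a) hb hT (corner b T x)
    have h' : (fun j => T ^ (1 / (2 * b j)) * corner b T x j) =
        fun j => (⌊T ^ (1 / (2 * b j)) * x j⌋ : ℝ) :=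
      funext fun j => mul_div_cancel₀ _ (ht j).ne'
    rw [h'] at h
    simp only [Set.mem_ofPred_eq, hKdef, h]
    exact (mul_le_iff_le_one_right hT).symm
  have hvol := volume_preimage_diagonal ht hmeas
  rw [volume_floor_mem hK, ← hset] at hvol
  have hpos : 0 < ∏ j, T ^ (1 / (2 * b j)) := Finset.prod_pos fun j _ => ht j
  have hreal := congrArg ENNReal.toReal hvol
  rw [ENNReal.toReal_natCast, ENNReal.toReal_mul, ENNReal.toReal_ofReal hpos.le] at hreal
  rw [hreal, Real.rpow_neg hT.le, Real.rpow_sum_of_pos hT, inv_mul_cancel_left₀ hpos.ne']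

/-- `lim_{T→∞} T^{-∑ 1/(2b_j)} · #{k ∈ ℤ^d : ∑ a_j |k_j|^{2b_j} ≤ T} = vol(B_{a,2b}^d)`. -/
theorem lattice_count_asymptotics
    (d : ℕ) (hd : 0 < d) (a b : Fin d → ℝ)
    (ha : ∀ j, 0 < a j) (hb : ∀ j, 0 < b j) :
    Tendsto
      (fun T : ℝ =>
        T ^ (-(∑ j, 1 / (2 * b j))) *
          (({k : Fin d → ℤ | ∑ j, a j * |(k j : ℝ)| ^ (2 * b j) ≤ T}).ncard : ℝ))
      atTop
      (nhds ((volume {x : Fin d → ℝ | ∑ j, a j * |x j| ^ (2 * b j) ≤ 1}).toReal) ) := by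
  change Tendsto (fun T : ℝ => T ^ (-(∑ j, 1 / (2 * b j))) *
      (({k : Fin d → ℤ | ellGauge a b (fun j => (k j : ℝ)) ≤ T}).ncard : ℝ)) atTop
    (nhds (volume {x : Fin d → ℝ | ellGauge a b x ≤ 1}).toReal)
  have hcont := continuous_ellGauge (a := a) hb
  set R : Fin d → ℝ := fun j => (1 / a j) ^ (2 * b j)⁻¹ + 1 with hR
  have hfin : volume (Set.Icc (-R) R) ≠ ⊤ := isCompact_Icc.measure_ne_top
  have hbox : ∀ {x y : Fin d → ℝ}, ellGauge a b y ≤ 1 → (∀ j, |x j - y j| ≤ 1) →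
      x ∈ Set.Icc (-R) R := by
    intro x y hy hxy
    have h : ∀ j, |x j| ≤ R j := fun j => by
      have h1 := abs_le_of_ellGauge_le ha hb hy j
      have h2 := abs_sub_abs_le_abs_sub (x j) (y j)
      have h3 := hxy j
      simp only [hR]
      linarith
    exact ⟨fun j => (abs_le.mp (h j)).1, fun j => (abs_le.mp (h j)).2⟩
  have hsub : {x | ellGauge a b x ≤ 1} ⊆ Set.Icc (-R) R := fun x hx => hbox hx fun j => by simp
  have key : Tendsto (fun T : ℝ => volume {x : Fin d → ℝ | ellGauge a b (corner b T x) ≤ 1}) atTop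
      (nhds (volume {x : Fin d → ℝ | ellGauge a b x ≤ 1})) := by
    refine tendsto_measure_of_ae_tendsto_indicator (B := Set.Icc (-R) R) atTop
      (hcont.measurable measurableSet_Iic)
      (fun T => (hcont.measurable.comp (measurable_corner b T)) measurableSet_Iic)
      measurableSet_Icc hfin ?_ ?_
    · filter_upwards [eventually_ge_atTop 1] with T hT x hx
      refine hbox hx fun j => (abs_sub_corner_le b (by linarith) x j).trans ?_
      exact inv_le_one_of_one_le₀ (Real.one_le_rpow hT (by have := hb j; positivity))
    · have hne : ∀ᵐ x : Fin d → ℝ, ellGauge a b x ≠ 1 := by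
        rw [ae_iff]
        simpa using volume_ellGauge_eq_one hb
      filter_upwards [hne] with x hx
      have hlim : Tendsto (fun T => ellGauge a b (corner b T x)) atTop (nhds (ellGauge a b x)) :=
        (hcont.tendsto x).comp (tendsto_corner hb x)
      rcases lt_or_gt_of_ne hx with h | h
      · filter_upwards [hlim.eventually_lt_const h] with T hT
        exact iff_of_true hT.le h.le
      · filter_upwards [hlim.eventually_const_lt h] with T hT
        exact iff_of_false (not_le.mpr hT) (not_le.mpr h)
  refine ((ENNReal.tendsto_toReal (measure_ne_top_of_subset hsub hfin)).comp key).congr' ?_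
  filter_upwards [eventually_gt_atTop 0] with T hT
  exact (normalized_count_eq ha hb hT).symm
end

section
/- Let d ∈ ℕ and let a_1,…,a_d and b_1,…,b_d be positive real numbers, and set g_d(b) = 1/(1/b_1 + ⋯ + 1/b_d). Define w : ℤ^d → ℝ by w(k) = (1 + Σ_{j=1}^d a_j |k_j|^{2b_j})^{-1/2}. If e : ℕ → ℤ^d (with ℕ = {1,2,3,…}) is a bijection such that the sequence n ↦ w(e(n)) is non-increasing, then lim_{n→∞} n^{g_d(b)} · w(e(n)) = (vol(B_{a,2b}^d))^{g_d(b)}. (Equivalently, since the n-th approximation number of the embedding I_d : W_2^{a,b}([0,1]^d) → L_2([0,1]^d) equals the n-th term of the non-increasing rearrangement of {w(k)}_{k∈ℤ^d}, this says lim_{n→∞} n^{g_d(b)} a_n(I_d) = (vol(B_{a,2b}^d))^{g_d(b)}.) -/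
/-!
Write `H(x) = ∑ a_j |x_j|^{2 b_j}`, so that the generalized ellipsoid is `{H ≤ 1}`, and
`R n = 1 + H(e n)`, so that `w (e n) = (R n)^{-1/2}`. The sequence `R` is nondecreasing and tends
to infinity, and the first `n` lattice points `e 0, …, e (n - 1)` contain `{1 + H < R n}` and are
contained in `{1 + H ≤ R n}`.

The form `H` is homogeneous under the dilation `x_j ↦ R^{1/(2 b_j)} x_j`, whose Jacobian is
`R^{1/(2 g)}`. Cutting space into boxes of side lengths `R^{-1/(2 b_j)}` therefore identifies
`n / (R n)^{1/(2 g)}` with the volume of the set of `y` whose rounding `⌊(R n)^{1/(2b)} y⌋` is one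
of the first `n` lattice points (`volume_floor_mem`). After rescaling, the rounding of `y` tends to
`y`, so the indicators of these sets converge to that of the ellipsoid off the level set `{H = 1}`,
which is null (`volume_anisoForm_eq_one`); all the sets lie in one box, and dominated convergence
gives `n / (R n)^{1/(2 g)} → vol {H ≤ 1}` (`tendsto_card_div_rpow`). Raising to the power `g`
gives the claim.
-/

open MeasureTheory Filter

/-! ### The form `H` and its sublevel sets -/

/-- The anisotropic form `H(x) = ∑ a_j |x_j|^{2 b_j}`; the generalized ellipsoid is `{H ≤ 1}`. -/
noncomputable def anisoForm {d : ℕ} (a b : Fin d → ℝ) (x : Fin d → ℝ) : ℝ :=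
  ∑ j, a j * |x j| ^ (2 * b j)

section
variable {d : ℕ} {a b : Fin d → ℝ}

lemma continuous_anisoForm (hb : ∀ j, 0 < b j) : Continuous (anisoForm a b) := by
  unfold anisoForm
  refine continuous_finsetSum _ fun j _ => continuous_const.mul ?_
  exact ((continuous_apply j).abs).rpow_const fun _ => Or.inr (by linarith [hb j])

lemma anisoForm_nonneg (ha : ∀ j, 0 < a j) (x : Fin d → ℝ) : 0 ≤ anisoForm a b x :=
  Finset.sum_nonneg fun j _ => mul_nonneg (ha j).le (Real.rpow_nonneg (abs_nonneg _) _)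

lemma abs_le_of_anisoForm_le (ha : ∀ j, 0 < a j) (hb : ∀ j, 0 < b j) {M : ℝ} {x : Fin d → ℝ}
    (h : anisoForm a b x ≤ M) (j : Fin d) : |x j| ≤ (M / a j) ^ (1 / (2 * b j)) := by
  have h1 : a j * |x j| ^ (2 * b j) ≤ M :=
    (Finset.single_le_sum (f := fun j => a j * |x j| ^ (2 * b j))
      (fun j _ => mul_nonneg (ha j).le (Real.rpow_nonneg (abs_nonneg _) _))
      (Finset.mem_univ j)).trans h
  have hbj := hb j
  have h2 : |x j| ^ (2 * b j) ≤ M / a j := by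
    rw [le_div_iff₀ (ha j)]; linarith
  have h3 := Real.rpow_le_rpow (Real.rpow_nonneg (abs_nonneg _) _) h2
    (show 0 ≤ 1 / (2 * b j) by positivity)
  rwa [← Real.rpow_mul (abs_nonneg _), mul_one_div_cancel (by positivity), Real.rpow_one] at h3

/-- Homogeneity of `H` under the anisotropic dilation `x_j ↦ R^{1/(2 b_j)} x_j`. -/
lemma anisoForm_dilate (hb : ∀ j, 0 < b j) {R : ℝ} (hR : 0 < R) (x : Fin d → ℝ) :
    anisoForm a b (fun j => x j / R ^ (1 / (2 * b j))) = anisoForm a b x / R := by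
  unfold anisoForm
  rw [Finset.sum_div]
  refine Finset.sum_congr rfl fun j _ => ?_
  have hbj := hb j
  rw [abs_div, abs_of_pos (Real.rpow_pos_of_pos hR _),
    Real.div_rpow (abs_nonneg _) (Real.rpow_nonneg hR.le _), ← Real.rpow_mul hR.le,
    one_div_mul_cancel (by positivity), Real.rpow_one, mul_div_assoc]

lemma anisoForm_smul_lt_one (ha : ∀ j, 0 < a j) (hb : ∀ j, 0 < b j) {c : ℝ} (hc0 : 0 < c)
    (hc1 : c < 1) {x : Fin d → ℝ} (hx : anisoForm a b x ≤ 1) : anisoForm a b (c • x) < 1 := by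
  by_cases h0 : ∃ j, x j ≠ 0
  · refine lt_of_lt_of_le ?_ hx
    have key : ∀ j, |(c • x) j| ≤ |x j| := fun j => by
      rw [Pi.smul_apply, smul_eq_mul, abs_mul, abs_of_pos hc0]
      nlinarith [abs_nonneg (x j)]
    obtain ⟨i, hi⟩ := h0
    refine Finset.sum_lt_sum (fun j _ => ?_) ⟨i, Finset.mem_univ i, ?_⟩
    · exact mul_le_mul_of_nonneg_left
        (Real.rpow_le_rpow (abs_nonneg _) (key j) (by linarith [hb j])) (ha j).le
    · refine mul_lt_mul_of_pos_left (Real.rpow_lt_rpow (abs_nonneg _) ?_ (by linarith [hb i])) (ha i)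
      rw [Pi.smul_apply, smul_eq_mul, abs_mul, abs_of_pos hc0]
      nlinarith [abs_pos.2 hi]
  · push Not at h0
    have : anisoForm a b (c • x) = 0 := Finset.sum_eq_zero fun j _ => by
      rw [Pi.smul_apply, h0 j, smul_zero, abs_zero, Real.zero_rpow (by linarith [hb j]), mul_zero]
    rw [this]; exact one_pos

lemma volume_anisoForm_le_lt_top (ha : ∀ j, 0 < a j) (hb : ∀ j, 0 < b j) :
    volume {x : Fin d → ℝ | anisoForm a b x ≤ 1} < ⊤ := by
  refine (measure_mono (t := Set.Icc (fun j => -(1 / a j) ^ (1 / (2 * b j)))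
    (fun j => (1 / a j) ^ (1 / (2 * b j)))) fun x hx => ?_).trans_lt
    (isCompact_Icc).measure_lt_top
  exact ⟨fun j => (abs_le.1 (abs_le_of_anisoForm_le ha hb hx j)).1,
    fun j => (abs_le.1 (abs_le_of_anisoForm_le ha hb hx j)).2⟩

/-- The unit level set of `H` is null: every contraction `c • {H ≤ 1}` with `c < 1` lies in
`{H < 1}`, so `{H < 1}` and `{H ≤ 1}` have the same finite volume. -/
lemma volume_anisoForm_eq_one (ha : ∀ j, 0 < a j) (hb : ∀ j, 0 < b j) :
    volume {x : Fin d → ℝ | anisoForm a b x = 1} = 0 := by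
  set K := {x : Fin d → ℝ | anisoForm a b x ≤ 1}
  set U := {x : Fin d → ℝ | anisoForm a b x < 1}
  have hK : volume K < ⊤ := volume_anisoForm_le_lt_top ha hb
  have hUK : U ⊆ K := Set.ofPred_subset_ofPred.2 fun x hx => le_of_lt hx
  have hU : MeasurableSet U := measurableSet_lt (continuous_anisoForm hb).measurable measurable_const
  have hle : volume K ≤ volume U := by
    have h1 : Tendsto (fun c : ℝ => ENNReal.ofReal (c ^ d) * volume K) (nhdsWithin 1 (Set.Iio 1))
        (nhds (ENNReal.ofReal (1 ^ d) * volume K)) := by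
      refine ENNReal.Tendsto.mul_const ?_ (Or.inr hK.ne)
      exact ENNReal.tendsto_ofReal
        (((continuous_pow d).tendsto (1 : ℝ)).mono_left nhdsWithin_le_nhds)
    rw [one_pow, ENNReal.ofReal_one, one_mul] at h1
    refine le_of_tendsto h1 ?_
    filter_upwards [Ioo_mem_nhdsLT (show (0 : ℝ) < 1 by norm_num)] with c hc
    have h2 := Measure.addHaar_smul (volume : Measure (Fin d → ℝ)) c K
    rw [Module.finrank_fin_fun, abs_of_pos (pow_pos hc.1 d)] at h2
    rw [← h2]
    refine measure_mono ?_
    rintro _ ⟨x, hx, rfl⟩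
    exact anisoForm_smul_lt_one ha hb hc.1 hc.2 hx
  have hsub : {x : Fin d → ℝ | anisoForm a b x = 1} ⊆ K \ U := fun x hx =>
    ⟨le_of_eq hx, fun h => absurd hx (ne_of_lt h)⟩
  refine measure_mono_null hsub ?_
  rw [measure_sdiff hUK hU.nullMeasurableSet ((measure_mono hUK).trans_lt hK).ne]
  exact tsub_eq_zero_of_le hle

lemma tendsto_anisoForm_cofinite (ha : ∀ j, 0 < a j) (hb : ∀ j, 0 < b j) :
    Tendsto (fun k : Fin d → ℤ => anisoForm a b (fun j => (k j : ℝ))) cofinite atTop := by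
  refine tendsto_atTop.2 fun M => ?_
  rw [eventually_cofinite]
  refine (Set.finite_Icc (fun j => -⌈(M / a j) ^ (1 / (2 * b j))⌉)
    (fun j => ⌈(M / a j) ^ (1 / (2 * b j))⌉)).subset fun k hk => ?_
  have h : ∀ j, |k j| ≤ ⌈(M / a j) ^ (1 / (2 * b j))⌉ := fun j => by
    have := (abs_le_of_anisoForm_le ha hb (not_le.1 hk).le j).trans (Int.le_ceil _)
    exact_mod_cast this
  exact ⟨fun j => (abs_le.1 (h j)).1, fun j => (abs_le.1 (h j)).2⟩

end

/-! ### Rounding to the lattice -/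

lemma setOf_floor_eq {d : ℕ} {s : Fin d → ℝ} (hs : ∀ j, 0 < s j) (k : Fin d → ℤ) :
    {y : Fin d → ℝ | (fun j => ⌊s j * y j⌋) = k} =
      Set.pi Set.univ fun j => Set.Ico ((k j : ℝ) / s j) (((k j : ℝ) + 1) / s j) := by
  ext y
  simp only [Set.mem_ofPred_eq, funext_iff, Set.mem_pi, Set.mem_univ, true_imp_iff, Set.mem_Ico,
    Int.floor_eq_iff]
  refine forall_congr' fun j => and_congr ?_ ?_
  · rw [div_le_iff₀ (hs j), mul_comm]
  · rw [lt_div_iff₀ (hs j), mul_comm]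

lemma measurableSet_floor_mem {d : ℕ} (s : Fin d → ℝ) (A : Set (Fin d → ℤ)) :
    MeasurableSet {y : Fin d → ℝ | (fun j => ⌊s j * y j⌋) ∈ A} := by
  have hm : Measurable (fun y : Fin d → ℝ => fun j => ⌊s j * y j⌋) :=
    measurable_pi_lambda _ fun j => Int.measurable_floor.comp
      (measurable_const.mul (measurable_pi_apply j))
  exact hm A.to_countable.measurableSet

/-- Each lattice point accounts for one box with side lengths `1 / s_j`. -/
lemma volume_floor_mem_s8 {d : ℕ} {s : Fin d → ℝ} (hs : ∀ j, 0 < s j) (A : Finset (Fin d → ℤ)) :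
    volume {y : Fin d → ℝ | (fun j => ⌊s j * y j⌋) ∈ A} =
      ENNReal.ofReal (A.card / ∏ j, s j) := by
  have hU : {y : Fin d → ℝ | (fun j => ⌊s j * y j⌋) ∈ A} =
      ⋃ k ∈ A, {y : Fin d → ℝ | (fun j => ⌊s j * y j⌋) = k} := by
    ext y; simp
  rw [hU, measure_biUnion_finset]
  · have : ∀ k ∈ A, volume {y : Fin d → ℝ | (fun j => ⌊s j * y j⌋) = k} =
        ENNReal.ofReal (∏ j, s j)⁻¹ := fun k _ => by
      rw [setOf_floor_eq hs, Real.volume_pi_Ico, ← ENNReal.ofReal_prod_of_nonneg,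
        ← Finset.prod_inv_distrib]
      · congr 1
        refine Finset.prod_congr rfl fun j _ => ?_
        rw [← sub_div, add_sub_cancel_left, one_div]
      · intro j _
        rw [← sub_div, add_sub_cancel_left]
        exact (one_div_pos.2 (hs j)).le
    rw [Finset.sum_congr rfl this, Finset.sum_const, nsmul_eq_mul, div_eq_mul_inv,
      ENNReal.ofReal_mul (by positivity), ENNReal.ofReal_natCast]
  · intro k _ l _ hkl
    refine Set.disjoint_left.2 fun y hy hy' => hkl ?_
    exact hy.symm.trans hy'
  · intro k _
    exact measurableSet_floor_mem s {k}

/-- The lattice rounding of `y` at scale `s → ∞` converges to `y`. -/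
lemma tendsto_floor_mul_div_self {ι : Type*} {l : Filter ι} {s : ι → ℝ} (hs : Tendsto s l atTop)
    (y : ℝ) : Tendsto (fun i => (⌊s i * y⌋ : ℝ) / s i) l (nhds y) := by
  have h0 : Tendsto (fun i => y - (s i)⁻¹) l (nhds y) := by
    simpa using tendsto_const_nhds.sub (tendsto_inv_atTop_zero.comp hs)
  refine tendsto_of_tendsto_of_tendsto_of_le_of_le' h0 tendsto_const_nhds ?_ ?_
  · filter_upwards [hs.eventually_gt_atTop 0] with i hi
    rw [le_div_iff₀ hi, sub_mul, inv_mul_cancel₀ hi.ne']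
    linarith [Int.sub_one_lt_floor (s i * y)]
  · filter_upwards [hs.eventually_gt_atTop 0] with i hi
    rw [div_le_iff₀ hi, mul_comm]
    exact Int.floor_le _

/-! ### Asymptotic lattice point count -/

/-- Lattice point count for an exhaustion of `ℤ^d` by sets `A n` squeezed between the open and
closed sublevel sets `1 + H < R n` and `1 + H ≤ R n`, as `R n → ∞`: up to normalization `#(A n)`
is the volume of `{y | ⌊R^{1/(2b)} y⌋ ∈ A n}`, and the indicators of these sets converge almost
everywhere to that of the ellipsoid. -/
lemma tendsto_card_div_rpow {d : ℕ} {a b : Fin d → ℝ} (ha : ∀ j, 0 < a j) (hb : ∀ j, 0 < b j)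
    {R : ℕ → ℝ} (hR1 : ∀ n, 1 ≤ R n) (hR : Tendsto R atTop atTop) (A : ℕ → Finset (Fin d → ℤ))
    (hA1 : ∀ n k, 1 + anisoForm a b (fun j => (k j : ℝ)) < R n → k ∈ A n)
    (hA2 : ∀ n, ∀ k ∈ A n, 1 + anisoForm a b (fun j => (k j : ℝ)) ≤ R n) :
    Tendsto (fun n => ((A n).card : ℝ) / R n ^ (∑ j, 1 / (2 * b j))) atTop
      (nhds (volume {x : Fin d → ℝ | anisoForm a b x ≤ 1}).toReal) := by
  have hR0 : ∀ n, 0 < R n := fun n => one_pos.trans_le (hR1 n)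
  set s : ℕ → Fin d → ℝ := fun n j => R n ^ (1 / (2 * b j)) with hs_def
  have hs1 : ∀ n j, 1 ≤ s n j := fun n j =>
    Real.one_le_rpow (hR1 n) (by have := hb j; positivity)
  have hs0 : ∀ n j, 0 < s n j := fun n j => one_pos.trans_le (hs1 n j)
  have hsT : ∀ j, Tendsto (fun n => s n j) atTop atTop := fun j =>
    (tendsto_rpow_atTop (by have := hb j; positivity)).comp hR
  set S : ℕ → Set (Fin d → ℝ) := fun n => {y | (fun j => ⌊s n j * y j⌋) ∈ A n} with hS_def
  set F : ℕ → (Fin d → ℝ) → Fin d → ℝ := fun n y j => (⌊s n j * y j⌋ : ℝ) / s n j with hF_def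
  have hform : ∀ n y, anisoForm a b (F n y) =
      anisoForm a b (fun j => ((⌊s n j * y j⌋ : ℤ) : ℝ)) / R n := fun n y =>
    anisoForm_dilate hb (hR0 n) _
  have hS1 : ∀ n y, anisoForm a b (F n y) < 1 - (R n)⁻¹ → y ∈ S n := fun n y h => by
    refine hA1 n _ ?_
    rw [hform, div_lt_iff₀ (hR0 n), sub_mul, inv_mul_cancel₀ (hR0 n).ne'] at h
    linarith
  have hS2 : ∀ n, ∀ y ∈ S n, anisoForm a b (F n y) ≤ 1 := fun n y h => by
    have := hA2 n _ h
    rw [hform, div_le_iff₀ (hR0 n)]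
    linarith
  have hFT : ∀ y, Tendsto (fun n => anisoForm a b (F n y)) atTop (nhds (anisoForm a b y)) :=
    fun y => ((continuous_anisoForm hb).tendsto y).comp
      (tendsto_pi_nhds.2 fun j => tendsto_floor_mul_div_self (hsT j) (y j))
  have hvol : Tendsto (fun n => volume (S n)) atTop
      (nhds (volume {x : Fin d → ℝ | anisoForm a b x ≤ 1})) := by
    refine tendsto_measure_of_ae_tendsto_indicator (L := atTop)
      (B := Set.Icc (fun j => -((1 / a j) ^ (1 / (2 * b j)) + 1))
        (fun j => (1 / a j) ^ (1 / (2 * b j)) + 1)) ?_ ?_ measurableSet_Icc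
        isCompact_Icc.measure_lt_top.ne ?_ ?_
    · exact measurableSet_le (continuous_anisoForm hb).measurable measurable_const
    · exact fun n => measurableSet_floor_mem (s n) (A n : Set (Fin d → ℤ))
    · refine Eventually.of_forall fun n y hy => ?_
      have h : ∀ j, |y j| ≤ (1 / a j) ^ (1 / (2 * b j)) + 1 := fun j => by
        have h1 : |F n y j| ≤ _ := abs_le_of_anisoForm_le ha hb (hS2 n y hy) j
        have h2 : |y j - F n y j| ≤ 1 := by
          have e1 : F n y j ≤ y j := by
            rw [hF_def]; dsimp only
            rw [div_le_iff₀ (hs0 n j), mul_comm]; exact Int.floor_le _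
          have e2 : y j - 1 ≤ F n y j := by
            rw [hF_def]; dsimp only
            rw [le_div_iff₀ (hs0 n j)]
            nlinarith [Int.sub_one_lt_floor (s n j * y j), hs1 n j]
          rw [abs_le]; constructor <;> linarith
        have h3 := abs_add_le (F n y j) (y j - F n y j)
        rw [add_sub_cancel] at h3
        linarith
      exact ⟨fun j => (abs_le.1 (h j)).1, fun j => (abs_le.1 (h j)).2⟩
    · have hnull : ∀ᵐ y : Fin d → ℝ, anisoForm a b y ≠ 1 := by
        rw [ae_iff]
        simpa using volume_anisoForm_eq_one ha hb
      filter_upwards [hnull] with y hy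
      rcases lt_or_gt_of_ne hy with h | h
      · have hlim : Tendsto (fun n => 1 - (R n)⁻¹) atTop (nhds 1) := by
          simpa using tendsto_const_nhds.sub (tendsto_inv_atTop_zero.comp hR)
        filter_upwards [(hFT y).eventually_lt hlim h] with n hn
        exact ⟨fun _ => h.le, fun _ => hS1 n y hn⟩
      · filter_upwards [(hFT y).eventually_const_lt h] with n hn
        exact ⟨fun hy' => absurd (hS2 n y hy') (not_le.2 hn), fun hy' => absurd hy' (not_le.2 h)⟩
  refine ((ENNReal.tendsto_toReal (volume_anisoForm_le_lt_top ha hb).ne).comp hvol).congr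
    fun n => ?_
  have h1 := volume_floor_mem_s8 (hs0 n) (A n)
  have h2 : ∏ j, s n j = R n ^ (∑ j, 1 / (2 * b j)) :=
    (Real.rpow_sum_of_pos (hR0 n) _ _).symm
  rw [Function.comp_apply, hS_def]
  dsimp only
  rw [h1, ENNReal.toReal_ofReal, h2]
  exact div_nonneg (Nat.cast_nonneg _) (Finset.prod_nonneg fun j _ => (hs0 n j).le)

/-! ### The approximation numbers -/

/-- Strong equivalence of the approximation numbers of the weighted anisotropic Sobolev
embedding: if `w(k) = (1 + ∑ a_j |k_j|^{2b_j})^{-1/2}` and `e : ℕ → ℤ^d` is a bijection for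
which `n ↦ w(e(n))` is non-increasing (so `w(e(n))` is the non-increasing rearrangement of
`{w(k)}_{k∈ℤ^d}`, i.e. the `n`-th approximation number `a_n(I_d)`), then
`lim_{n→∞} n^{g_d(b)} · w(e(n)) = (vol(B_{a,2b}^d))^{g_d(b)}`, where
`g_d(b) = 1/(1/b_1 + ⋯ + 1/b_d)`. -/
theorem strong_equivalence_approximation_numbers
    (d : ℕ) (hd : 0 < d) (a b : Fin d → ℝ)
    (ha : ∀ j, 0 < a j) (hb : ∀ j, 0 < b j)
    (g : ℝ) (hg : g = 1 / ∑ j, 1 / b j)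
    (w : (Fin d → ℤ) → ℝ)
    (hw : ∀ k, w k = (1 + ∑ j, a j * |(k j : ℝ)| ^ (2 * b j)) ^ (-(1 / 2 : ℝ)))
    (e : ℕ → (Fin d → ℤ)) (he : Function.Bijective e)
    (hdecr : Antitone fun n => w (e n)) :
    Tendsto (fun n : ℕ => (n : ℝ) ^ g * w (e n)) atTop
      (nhds ((volume {x : Fin d → ℝ | ∑ j, a j * |x j| ^ (2 * b j) ≤ 1}).toReal ^ g)) := by
  set R : ℕ → ℝ := fun n => 1 + anisoForm a b (fun j => ((e n j : ℤ) : ℝ)) with hR_def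
  have hR1 : ∀ n, 1 ≤ R n := fun n => le_add_of_nonneg_right (anisoForm_nonneg ha _)
  have hR0 : ∀ n, 0 < R n := fun n => one_pos.trans_le (hR1 n)
  have hwR : ∀ n, w (e n) = R n ^ (-(1 / 2 : ℝ)) := fun n => hw (e n)
  have hRT : Tendsto R atTop atTop := by
    refine tendsto_atTop_add_const_left _ _ ?_
    have := (tendsto_anisoForm_cofinite ha hb).comp he.1.tendsto_cofinite
    rwa [Nat.cofinite_eq_atTop] at this
  have hmono : Monotone R := fun m n hmn => by
    have h := hdecr hmn
    simp only [hwR] at h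
    exact (Real.rpow_le_rpow_iff_of_neg (hR0 n) (hR0 m) (by norm_num)).1 h
  -- the first `n` lattice points are squeezed between the two sublevel sets at height `R n`
  have hmain := tendsto_card_div_rpow ha hb hR1 hRT (fun n => (Finset.range n).image e)
    (fun n k hk => by
      obtain ⟨m, rfl⟩ := he.2 k
      exact Finset.mem_image_of_mem e (Finset.mem_range.2 (hmono.reflect_lt hk)))
    (fun n k hk => by
      obtain ⟨m, hm, rfl⟩ := Finset.mem_image.1 hk
      exact hmono (Finset.mem_range.1 hm).le)
  have : Nonempty (Fin d) := ⟨⟨0, hd⟩⟩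
  have hsum : 0 < ∑ j, 1 / b j :=
    Finset.sum_pos (fun j _ => one_div_pos.2 (hb j)) Finset.univ_nonempty
  have hg0 : 0 < g := hg ▸ one_div_pos.2 hsum
  have hexp : (∑ j, 1 / (2 * b j)) * g = 1 / 2 := by
    have : ∑ j, 1 / (2 * b j) = (1 / 2) * ∑ j, 1 / b j := by
      rw [Finset.mul_sum]
      exact Finset.sum_congr rfl fun j _ => one_div_mul_one_div 2 (b j) |>.symm
    rw [this, hg, mul_assoc, mul_one_div_cancel hsum.ne', mul_one]
  refine (hmain.rpow_const (p := g) (Or.inr hg0.le)).congr fun n => ?_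
  rw [Finset.card_image_of_injective _ he.1, Finset.card_range,
    Real.div_rpow (Nat.cast_nonneg n) (Real.rpow_nonneg (hR0 n).le _), ← Real.rpow_mul (hR0 n).le,
    hexp, hwR, Real.rpow_neg (hR0 n).le, div_eq_mul_inv]
end

section
/- Let d ∈ ℕ, let a_1,…,a_d and b_1,…,b_d be positive real numbers, and fix ω ∈ (0,1). For ε ∈ (0,1) define n(ε, APP_d) = #{k ∈ ℤ^d : ω^{Σ_{j=1}^d a_j |k_j|^{2b_j}} > ε²} and n(ε, I_d) = #{k ∈ ℤ^d : Σ_{j=1}^d a_j |k_j|^{2b_j} < ε^{-2} - 1}. Then for every ε ∈ (0,1): (1) n(ε, APP_d) = n(ε₂, I_d) where ε₂ = (ln(ε^{-2})/ln(ω^{-1}) + 1)^{-1/2}, and (2) n(ε, I_d) = n(ε₁, APP_d) where ε₁ = ω^{(ε^{-2} - 1)/2}. -/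
/-! In both identities the two index sets coincide, so no counting is needed. As `0 < ω < 1`, taking
logarithms turns `ε² < ω ^ S` into `S < ln ε⁻² / ln ω⁻¹`, and the latter quotient is `ε₂⁻² - 1`.
Conversely `ε₁² = ω ^ (ε⁻² - 1)`, and `x ↦ ω ^ x` is strictly decreasing. -/

/-- Relation between the information complexities
`n(ε, APP_d) = #{k ∈ ℤ^d : ω^{∑ a_j |k_j|^{2b_j}} > ε²}` and
`n(ε, I_d) = #{k ∈ ℤ^d : ∑ a_j |k_j|^{2b_j} < ε^{-2} - 1}`:
for `ε ∈ (0,1)`, `n(ε, APP_d) = n(ε₂, I_d)` with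
`ε₂ = (ln ε^{-2} / ln ω^{-1} + 1)^{-1/2}`, and `n(ε, I_d) = n(ε₁, APP_d)` with
`ε₁ = ω^{(ε^{-2}-1)/2}`. -/
theorem info_complexity_I_APP_relation
    (d : ℕ) (hd : 0 < d) (a b : Fin d → ℝ)
    (ha : ∀ j, 0 < a j) (hb : ∀ j, 0 < b j)
    (ω : ℝ) (hω : ω ∈ Set.Ioo (0 : ℝ) 1)
    (ε : ℝ) (hε : ε ∈ Set.Ioo (0 : ℝ) 1)
    (ε₁ ε₂ : ℝ)
    (hε₂ : ε₂ = (Real.log (ε⁻¹ ^ 2) / Real.log ω⁻¹ + 1) ^ (-(1 / 2 : ℝ)))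
    (hε₁ : ε₁ = ω ^ ((ε⁻¹ ^ 2 - 1) / 2)) :
    ({k : Fin d → ℤ |
        ε ^ 2 < ω ^ (∑ j, a j * |(k j : ℝ)| ^ (2 * b j))}).ncard =
      ({k : Fin d → ℤ |
        ∑ j, a j * |(k j : ℝ)| ^ (2 * b j) < ε₂⁻¹ ^ 2 - 1}).ncard ∧
    ({k : Fin d → ℤ |
        ∑ j, a j * |(k j : ℝ)| ^ (2 * b j) < ε⁻¹ ^ 2 - 1}).ncard =
      ({k : Fin d → ℤ |
        ε₁ ^ 2 < ω ^ (∑ j, a j * |(k j : ℝ)| ^ (2 * b j))}).ncard := by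
  obtain ⟨hω0, hω1⟩ := hω
  obtain ⟨hε0, hε1⟩ := hε
  have hlω : Real.log ω < 0 := Real.log_neg hω0 hω1
  have hlε : Real.log ε < 0 := Real.log_neg hε0 hε1
  have hL : Real.log (ε⁻¹ ^ 2) / Real.log ω⁻¹ = 2 * Real.log ε / Real.log ω := by
    rw [Real.log_pow, Real.log_inv, Real.log_inv]
    push_cast
    rw [mul_neg, neg_div_neg_eq]
  have hL0 : 0 < 2 * Real.log ε / Real.log ω := div_pos_of_neg_of_neg (by linarith) hlω
  have h₂ : ε₂⁻¹ ^ 2 - 1 = 2 * Real.log ε / Real.log ω := by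
    rw [hε₂, hL, Real.rpow_neg (by linarith), inv_inv, ← Real.sqrt_eq_rpow,
      Real.sq_sqrt (by linarith)]
    ring
  have h₁ : ε₁ ^ 2 = ω ^ (ε⁻¹ ^ 2 - 1) := by
    rw [hε₁, ← Real.rpow_mul_natCast hω0.le]
    congr 1
    push_cast
    ring
  constructor
  · congr 1
    ext k
    simp only [Set.mem_setOf_eq]
    rw [h₂, lt_div_iff_of_neg hlω, ← Real.log_lt_log_iff (by positivity) (by positivity),
      Real.log_rpow hω0, Real.log_pow]
    push_cast
    rfl
  · congr 1
    ext k
    simp only [Set.mem_setOf_eq]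
    rw [h₁, Real.rpow_lt_rpow_left_iff_of_base_lt_one hω0 hω1]
end

section
/- Let a = {a_j}_{j≥1} and b = {b_j}_{j≥1} be sequences of positive real numbers with a_1 ≤ a_2 ≤ ⋯ and inf_{j≥1} b_j > 0, and for d ∈ ℕ, ε ∈ (0,1) let n(ε, I_d) = #{k ∈ ℤ^d : Σ_{j=1}^d a_j |k_j|^{2b_j} < ε^{-2} - 1}. Then uniform weak tractability holds (i.e., for all α, β > 0: for every δ > 0 there is M > 0 such that ln n(ε, I_d) ≤ δ((ε^{-1})^α + d^β) whenever d ∈ ℕ, ε ∈ (0,1) and ε^{-1} + d ≥ M) if and only if lim_{j→∞} (ln a_j)/(ln j) = ∞. -/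
/-!
Write `y = ε⁻¹` and `X = y ^ 2 - 1`, and let `c = inf b > 0`.

If `ln a_j / ln j → ∞`, then every counted `k` is supported on the coordinates with `a_j < X`, and
its entries are bounded by `(X / a_0) ^ (1 / (2c))`, a fixed power of `y` up to a constant. Since
`a_j` eventually exceeds every power of `j`, there are only `O(y ^ η)` such coordinates for each
`η > 0`, uniformly in `d`. The resulting box has at most `exp (K * y ^ (α / 2))` points
(`log_ncard_le`), a bound free of `d`, which is `o(y ^ α)` for large `y` and `o(d ^ β)` for
bounded `y`.

Conversely, if `a_d < d ^ C` for arbitrarily large `d`, monotonicity gives `a_j < d ^ C` for all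
`j < d`, so with `ε⁻¹ = d ^ m` and `m` large (depending on `C` only) all of `{0, 1} ^ d` is counted.
Then `ln n ≥ d ln 2`, while for `α = 1 / (2m)` and `β = 1 / 2` the denominator is only `2 √d`.
-/

open Filter

/-- The finite box containing all counted frequencies: entries in `[-N, N]` on the coordinates
with `a j < X`, and zero elsewhere. -/
noncomputable def freqBox (a : ℕ → ℝ) (X : ℝ) (N : ℕ) (d : ℕ) : Finset (Fin d → ℤ) :=
  Fintype.piFinset fun j : Fin d =>
    open Classical in if a j < X then Finset.Icc (-(N : ℤ)) N else {0}

lemma subset_freqBox (a b : ℕ → ℝ) (ha : ∀ j, 0 < a j) (hamono : Monotone a) (c : ℝ) (hc : 0 < c)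
    (hcb : ∀ j, c ≤ b j) (X : ℝ) (d : ℕ) :
    {k : Fin d → ℤ | ∑ j : Fin d, a j * |(k j : ℝ)| ^ (2 * b j) < X} ⊆
      (freqBox a X ⌊(X / a 0) ^ (1 / (2 * c))⌋₊ d : Set (Fin d → ℤ)) := by
  intro k hk
  simp only [Set.mem_ofPred_eq] at hk
  simp only [freqBox, Finset.mem_coe, Fintype.mem_piFinset]
  intro j
  by_cases hk0 : k j = 0
  · rw [hk0]; split_ifs <;> simp
  have hterm : a j * |(k j : ℝ)| ^ (2 * b j) < X := by
    refine lt_of_le_of_lt ?_ hk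
    exact Finset.single_le_sum (f := fun j : Fin d => a j * |(k j : ℝ)| ^ (2 * b j))
      (fun i _ => mul_nonneg (ha i).le (by positivity)) (Finset.mem_univ j)
  have h1 : (1 : ℝ) ≤ |(k j : ℝ)| := by exact_mod_cast Int.one_le_abs hk0
  have hpow : (1 : ℝ) ≤ |(k j : ℝ)| ^ (2 * b j) :=
    Real.one_le_rpow h1 (by linarith [hcb j])
  have haX : a j < X := lt_of_le_of_lt (le_mul_of_one_le_right (ha j).le hpow) hterm
  rw [if_pos haX, Finset.mem_Icc, ← abs_le]
  have hexp : |(k j : ℝ)| ^ (2 * c) ≤ |(k j : ℝ)| ^ (2 * b j) :=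
    Real.rpow_le_rpow_of_exponent_le h1 (by linarith [hcb j])
  have h2 : |(k j : ℝ)| ^ (2 * c) ≤ X / a 0 := by
    rw [le_div_iff₀ (ha 0), mul_comm]
    calc a 0 * |(k j : ℝ)| ^ (2 * c) ≤ a j * |(k j : ℝ)| ^ (2 * b j) :=
          mul_le_mul (hamono (Nat.zero_le _)) hexp (by positivity) (ha j).le
      _ ≤ X := hterm.le
  have h3 : |(k j : ℝ)| ≤ (X / a 0) ^ (1 / (2 * c)) := by
    calc |(k j : ℝ)| = (|(k j : ℝ)| ^ (2 * c)) ^ (1 / (2 * c)) := by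
          rw [← Real.rpow_mul (abs_nonneg _), mul_one_div_cancel (by positivity), Real.rpow_one]
      _ ≤ _ := Real.rpow_le_rpow (by positivity) h2 (by positivity)
  have h4 : (k j).natAbs ≤ ⌊(X / a 0) ^ (1 / (2 * c))⌋₊ := by
    apply Nat.le_floor
    rw [Nat.cast_natAbs]
    exact_mod_cast h3
  rw [Int.abs_eq_natAbs]
  exact_mod_cast h4

lemma card_freqBox_le (a : ℕ → ℝ) (X : ℝ) (N d m : ℕ) (hm : ∀ j, a j < X → j < m) :
    (freqBox a X N d).card ≤ (2 * N + 1) ^ m := by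
  classical
  have hcard : (freqBox a X N d).card = (2 * N + 1) ^
      ((Finset.univ : Finset (Fin d)).filter fun j : Fin d => a j < X).card := by
    rw [freqBox, Fintype.card_piFinset, ← Finset.prod_const, Finset.prod_filter]
    refine Finset.prod_congr rfl fun j _ => ?_
    split_ifs
    · rw [Int.card_Icc]; omega
    · simp
  rw [hcard]
  refine Nat.pow_le_pow_right (by omega) ?_
  calc ((Finset.univ : Finset (Fin d)).filter fun j : Fin d => a j < X).card
      ≤ (Finset.range m).card := by
        refine Finset.card_le_card_of_injOn (fun j : Fin d => (j : ℕ)) ?_ ?_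
        · intro j hj
          simp at hj ⊢
          exact hm _ hj
        · intro i _ j _ hij
          exact Fin.ext hij
    _ = m := Finset.card_range m

/-- Superpolynomial growth of `a` makes the number of indices with `a j < y ^ 2 - 1` at most
a constant times `y ^ η`. -/
lemma exists_index_bound (a : ℕ → ℝ) (ha : ∀ j, 0 < a j)
    (h : Tendsto (fun j : ℕ => Real.log (a j) / Real.log j) atTop atTop) (η : ℝ) (hη : 0 < η) :
    ∃ B : ℝ, 0 < B ∧ ∀ y : ℝ, 1 < y → ∃ m : ℕ, (m : ℝ) ≤ B * y ^ η ∧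
      ∀ j, a j < y ^ 2 - 1 → j < m := by
  obtain ⟨J, hJ⟩ := eventually_atTop.1 (h.eventually_ge_atTop (2 / η))
  refine ⟨J + 4, by positivity, fun y hy => ⟨J + 2 + ⌈y ^ η⌉₊, ?_, ?_⟩⟩
  · have h1 : 1 ≤ y ^ η := Real.one_le_rpow hy.le hη.le
    have h2 : (⌈y ^ η⌉₊ : ℝ) < y ^ η + 1 := Nat.ceil_lt_add_one (by positivity)
    push_cast
    nlinarith [mul_nonneg (Nat.cast_nonneg J : (0 : ℝ) ≤ J) (sub_nonneg.2 h1)]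
  · intro j hj
    by_contra hcon
    push Not at hcon
    have hjJ := hJ j (by omega)
    have hj2 : (1 : ℝ) < j := by
      have : 1 < j := by omega
      exact_mod_cast this
    rw [le_div_iff₀ (Real.log_pos hj2)] at hjJ
    have hy0 : 0 < y := by linarith
    have h1 : y ^ η ≤ j := (Nat.le_ceil _).trans (by exact_mod_cast (by omega : ⌈y ^ η⌉₊ ≤ j))
    have h2 : η * Real.log y ≤ Real.log j := by
      rw [← Real.log_rpow hy0]
      exact Real.log_le_log (by positivity) h1
    have h3 : Real.log (a j) < 2 * Real.log y := by
      have : Real.log (a j) < Real.log (y ^ 2) := Real.log_lt_log (ha j) (by linarith)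
      simpa using this
    have h4 : 2 * Real.log y ≤ 2 / η * Real.log j := by
      rw [div_mul_eq_mul_div, le_div_iff₀ hη]
      linarith
    linarith

/-- Dimension-free upper bound on the logarithm of the information complexity. -/
lemma log_ncard_le (a b : ℕ → ℝ) (ha : ∀ j, 0 < a j) (hamono : Monotone a) (c : ℝ) (hc : 0 < c)
    (hcb : ∀ j, c ≤ b j)
    (h : Tendsto (fun j : ℕ => Real.log (a j) / Real.log j) atTop atTop) (η : ℝ) (hη : 0 < η) :
    ∃ K : ℝ, 0 < K ∧ ∀ (d : ℕ) (y : ℝ), 1 < y →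
      Real.log (({k : Fin d → ℤ |
        ∑ j : Fin d, a j * |(k j : ℝ)| ^ (2 * b j) < y ^ 2 - 1}).ncard) ≤ K * y ^ (2 * η) := by
  obtain ⟨B, hB, hBm⟩ := exists_index_bound a ha h η hη
  set A : ℝ := (1 / a 0) ^ (1 / (2 * c)) with hA
  have ha0 := ha 0
  have hA0 : 0 < A := by positivity
  have hL : 0 < Real.log (2 * A + 1) := Real.log_pos (by linarith)
  refine ⟨B * (Real.log (2 * A + 1) + 1 / c * (1 / η)), by positivity, fun d y hy => ?_⟩
  obtain ⟨m, hm, hmj⟩ := hBm y hy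
  have hy0 : 0 < y := by linarith
  have hX0 : 0 ≤ y ^ 2 - 1 := by nlinarith
  set N : ℕ := ⌊((y ^ 2 - 1) / a 0) ^ (1 / (2 * c))⌋₊ with hN
  set S := {k : Fin d → ℤ | ∑ j : Fin d, a j * |(k j : ℝ)| ^ (2 * b j) < y ^ 2 - 1} with hS
  have hcard : S.ncard ≤ (2 * N + 1) ^ m := by
    refine (Set.ncard_le_ncard (subset_freqBox a b ha hamono c hc hcb _ d)
      (Finset.finite_toSet _)).trans ?_
    rw [Set.ncard_coe_finset]
    exact card_freqBox_le a _ N d m hmj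
  have hη1 : 1 ≤ y ^ η := Real.one_le_rpow hy.le hη.le
  have hNle : (N : ℝ) ≤ A * y ^ (1 / c) := by
    calc (N : ℝ) ≤ ((y ^ 2 - 1) / a 0) ^ (1 / (2 * c)) := Nat.floor_le (by positivity)
      _ ≤ (1 / a 0 * y ^ 2) ^ (1 / (2 * c)) := by
          refine Real.rpow_le_rpow (by positivity) ?_ (by positivity)
          rw [one_div_mul_eq_div]
          gcongr
          linarith
      _ = A * y ^ (1 / c) := by
          rw [Real.mul_rpow (by positivity) (by positivity), ← Real.rpow_natCast y 2,
            ← Real.rpow_mul hy0.le]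
          congr 2
          push_cast
          field_simp
  have hlogN : Real.log (2 * N + 1) ≤ (Real.log (2 * A + 1) + 1 / c * (1 / η)) * y ^ η := by
    have h1 : 1 ≤ y ^ (1 / c) := Real.one_le_rpow hy.le (by positivity)
    calc Real.log (2 * N + 1) ≤ Real.log ((2 * A + 1) * y ^ (1 / c)) :=
          Real.log_le_log (by positivity) (by nlinarith)
      _ = Real.log (2 * A + 1) + 1 / c * Real.log y := by
          rw [Real.log_mul (by positivity) (by positivity), Real.log_rpow hy0]
      _ ≤ Real.log (2 * A + 1) * y ^ η + 1 / c * (y ^ η / η) :=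
          add_le_add (le_mul_of_one_le_right hL.le hη1)
            (mul_le_mul_of_nonneg_left (Real.log_le_rpow_div hy0.le hη) (by positivity))
      _ = _ := by ring
  have hlogN0 : 0 ≤ Real.log (2 * (N : ℝ) + 1) := Real.log_nonneg (by
    linarith [(Nat.cast_nonneg N : (0 : ℝ) ≤ N)])
  have hlog : Real.log S.ncard ≤ m * Real.log (2 * N + 1) := by
    rcases Nat.eq_zero_or_pos S.ncard with h0 | h0
    · rw [h0, Nat.cast_zero, Real.log_zero]
      positivity
    · rw [← Real.log_pow]
      exact Real.log_le_log (by exact_mod_cast h0) (by exact_mod_cast hcard)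
  calc Real.log S.ncard ≤ m * Real.log (2 * N + 1) := hlog
    _ ≤ (B * y ^ η) * ((Real.log (2 * A + 1) + 1 / c * (1 / η)) * y ^ η) :=
        mul_le_mul hm hlogN hlogN0 (by positivity)
    _ = _ := by
        rw [two_mul η, Real.rpow_add hy0]; ring

/-- If `∑ a_j < X` over the first `d` indices, then the whole discrete cube `{0, 1} ^ d`
is counted. -/
lemma two_pow_le_ncard (a b : ℕ → ℝ) (ha : ∀ j, 0 < a j) (hamono : Monotone a) (c : ℝ) (hc : 0 < c)
    (hcb : ∀ j, c ≤ b j) (X : ℝ) (d : ℕ) (hX : ∑ j : Fin d, a j < X) :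
    2 ^ d ≤ ({k : Fin d → ℤ | ∑ j : Fin d, a j * |(k j : ℝ)| ^ (2 * b j) < X}).ncard := by
  have hcube : (Fintype.piFinset fun _ : Fin d => ({0, 1} : Finset ℤ)).card = 2 ^ d := by
    simp
  rw [← hcube, ← Set.ncard_coe_finset]
  refine Set.ncard_le_ncard ?_
    ((Finset.finite_toSet _).subset (subset_freqBox a b ha hamono c hc hcb X d))
  intro k hk
  simp only [Finset.mem_coe, Fintype.mem_piFinset, Finset.mem_insert, Finset.mem_singleton] at hk
  refine lt_of_le_of_lt (Finset.sum_le_sum fun j _ => ?_) hX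
  have hbj : 2 * b j ≠ 0 := by have := hcb j; intro h0; linarith
  rcases hk j with h0 | h1
  · simp [h0, Real.zero_rpow hbj, (ha j).le]
  · simp [h1]

theorem UWT_iff_cond
    (a b : ℕ → ℝ) (ha : ∀ j, 0 < a j) (hb : ∀ j, 0 < b j)
    (hamono : Monotone a) (hbinf : 0 < ⨅ j, b j) :
    (∀ α β : ℝ, 0 < α → 0 < β → ∀ δ : ℝ, 0 < δ → ∃ M : ℝ, 0 < M ∧
        ∀ d : ℕ, 0 < d → ∀ ε : ℝ, ε ∈ Set.Ioo (0 : ℝ) 1 → M ≤ ε⁻¹ + d →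
          |Real.log (({k : Fin d → ℤ |
              ∑ j : Fin d, a j * |(k j : ℝ)| ^ (2 * b j) < ε⁻¹ ^ 2 - 1}).ncard) /
            (ε⁻¹ ^ α + (d : ℝ) ^ β)| ≤ δ) ↔
      Tendsto (fun j : ℕ => Real.log (a j) / Real.log j) atTop atTop := by
  have hcb : ∀ j, (⨅ j, b j) ≤ b j := fun j =>
    ciInf_le ⟨0, by rintro _ ⟨i, rfl⟩; exact (hb i).le⟩ j
  set c := ⨅ j, b j with hcdef
  constructor
  · intro H
    by_contra hnot
    rw [tendsto_atTop] at hnot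
    push Not at hnot
    obtain ⟨C, hC⟩ := hnot
    -- With `m ≥ C + 2`, `a d < d ^ C` forces `∑ j < d, a j ≤ d * a d < d ^ m ≤ (d ^ m) ^ 2 - 1`.
    obtain ⟨m, hmC⟩ := exists_nat_ge (max C 0 + 2)
    have hm0 : (0 : ℝ) < m := by linarith [le_max_right C 0]
    obtain ⟨M, -, hM⟩ := H (1 / (2 * m)) (1 / 2) (by positivity) (by norm_num) (1 / 4) (by norm_num)
    obtain ⟨d, hdC, hd⟩ := (hC.and_eventually (eventually_ge_atTop (max 2 ⌈M⌉₊))).exists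
    have hd2 : 2 ≤ d := (le_max_left _ _).trans hd
    have hdM : M ≤ d := (Nat.le_ceil M).trans (by exact_mod_cast (le_max_right _ _).trans hd)
    have hd2' : (2 : ℝ) ≤ d := by exact_mod_cast hd2
    have hd0 : (0 : ℝ) < d := by linarith
    have hmpos : m ≠ 0 := by rintro rfl; simp at hm0
    have hdm : (1 : ℝ) < (d : ℝ) ^ m := one_lt_pow₀ (by linarith) hmpos
    have had : a d < (d : ℝ) ^ (m - 2 : ℝ) := by
      rw [div_lt_iff₀ (Real.log_pos (by linarith))] at hdC
      rw [← Real.log_lt_log_iff (ha d) (by positivity), Real.log_rpow hd0]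
      refine hdC.trans_le (mul_le_mul_of_nonneg_right ?_ (Real.log_nonneg (by linarith)))
      linarith [le_max_left C 0]
    have hsum : ∑ j : Fin d, a j < ((d : ℝ) ^ m) ^ 2 - 1 := by
      have h1 : ∑ j : Fin d, a j ≤ d * a d := by
        calc ∑ j : Fin d, a j ≤ ∑ _j : Fin d, a d :=
              Finset.sum_le_sum fun j _ => hamono j.2.le
          _ = d * a d := by simp
      have h2 : (d : ℝ) ^ (m - 2 : ℝ) * (d : ℝ) ^ 2 = (d : ℝ) ^ m := by
        rw [← Real.rpow_natCast, ← Real.rpow_natCast, ← Real.rpow_add hd0]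
        congr 1
        push_cast
        ring
      have h3 : d * a d < (d : ℝ) ^ m := by
        have : (d : ℝ) * a d < d * (d : ℝ) ^ (m - 2 : ℝ) := mul_lt_mul_of_pos_left had hd0
        have h4 : (0 : ℝ) < (d : ℝ) ^ (m - 2 : ℝ) := by positivity
        nlinarith [mul_pos h4 hd0]
      have h5 : (2 : ℝ) ≤ (d : ℝ) ^ m := hd2'.trans (le_self_pow₀ (by linarith) hmpos)
      nlinarith
    have hcount := two_pow_le_ncard a b ha hamono c hbinf hcb _ d hsum
    have hε := hM d (by omega) ((d : ℝ) ^ m)⁻¹ ⟨by positivity, inv_lt_one_of_one_lt₀ hdm⟩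
      (by rw [inv_inv]; linarith)
    rw [inv_inv] at hε
    have hden : ((d : ℝ) ^ m) ^ (1 / (2 * m) : ℝ) = (d : ℝ) ^ (1 / 2 : ℝ) := by
      rw [← Real.rpow_natCast, ← Real.rpow_mul hd0.le]
      congr 1
      field_simp
    rw [hden, ← Real.sqrt_eq_rpow] at hε
    have hs : 0 < √(d : ℝ) := Real.sqrt_pos.2 hd0
    have hε' := (le_abs_self _).trans hε
    rw [div_le_iff₀ (by positivity)] at hε'
    have hlog : d * Real.log 2 ≤ Real.log (({k : Fin d → ℤ |
        ∑ j : Fin d, a j * |(k j : ℝ)| ^ (2 * b j) < ((d : ℝ) ^ m) ^ 2 - 1}).ncard) := by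
      rw [← Real.log_pow]
      exact Real.log_le_log (by positivity) (by exact_mod_cast hcount)
    have hsd : √(d : ℝ) ≤ d := by
      rw [Real.sqrt_le_left hd0.le]
      nlinarith
    nlinarith [Real.log_two_gt_d9]
  · intro h α β hα hβ δ hδ
    obtain ⟨K, hK, hbound⟩ := log_ncard_le a b ha hamono c hbinf hcb h (α / 4) (by positivity)
    obtain ⟨y₀, hy₀⟩ := eventually_atTop.1
      ((tendsto_rpow_atTop (half_pos hα)).eventually_ge_atTop (K / δ))
    obtain ⟨D, hD⟩ := eventually_atTop.1
      ((tendsto_rpow_atTop hβ).eventually_ge_atTop (K * (max y₀ 1) ^ (α / 2) / δ))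
    refine ⟨max y₀ 1 + max D 0, by positivity, fun d hd ε hε hM => ?_⟩
    set y := ε⁻¹ with hy
    have hy1 : 1 < y := (one_lt_inv₀ hε.1).2 hε.2
    have hy0 : 0 < y := by linarith
    have hd0 : (0 : ℝ) < d := by exact_mod_cast hd
    rw [abs_of_nonneg (div_nonneg (Real.log_natCast_nonneg _) (by positivity)),
      div_le_iff₀ (by positivity)]
    refine (hbound d y hy1).trans ?_
    have h2 : 2 * (α / 4) = α / 2 := by ring
    rw [h2]
    -- Either `y` is large and `y ^ α` suffices, or `y` is bounded, so `d` is large.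
    rcases le_total (max y₀ 1) y with hcase | hcase
    · have h3 := hy₀ y ((le_max_left _ _).trans hcase)
      rw [div_le_iff₀ hδ] at h3
      have h4 : y ^ α = y ^ (α / 2) * y ^ (α / 2) := by
        rw [← Real.rpow_add hy0, add_halves]
      have h5 : K * y ^ (α / 2) ≤ δ * y ^ α := by
        rw [h4, ← mul_assoc, mul_comm δ]
        exact mul_le_mul_of_nonneg_right h3 (by positivity)
      have h6 : 0 ≤ δ * (d : ℝ) ^ β := by positivity
      linarith
    · have h3 := hD d (by linarith [le_max_left D 0])
      rw [div_le_iff₀ hδ] at h3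
      have h4 : K * y ^ (α / 2) ≤ K * (max y₀ 1) ^ (α / 2) :=
        mul_le_mul_of_nonneg_left (Real.rpow_le_rpow hy0.le hcase (by positivity)) hK.le
      have h6 : 0 ≤ δ * y ^ α := by positivity
      linarith
end

section
/- Let a = {a_j}_{j≥1} and b = {b_j}_{j≥1} be sequences of positive real numbers with a_1 ≤ a_2 ≤ ⋯ and inf_{j≥1} b_j > 0, and for d ∈ ℕ, ε ∈ (0,1) let n(ε, I_d) = #{k ∈ ℤ^d : Σ_{j=1}^d a_j |k_j|^{2b_j} < ε^{-2} - 1}. Then (2,1)-weak tractability holds (i.e., lim_{ε^{-1}+d→∞} (ln n(ε, I_d))/((ε^{-1})² + d) = 0) if and only if lim_{j→∞} a_j = ∞. -/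
open Filter

/-!
The condition is necessary because a monotone sequence that does not tend to infinity is bounded by
some `C`. Then every `k ∈ {0,1}^d` has `∑ a_j |k_j|^{2b_j} ≤ C d`, so for `ε⁻² = C d + 2` one has
`n(ε, I_d) ≥ 2^d`, and the quotient stays above `ln 2 / (C + 4)`.

It is sufficient by an exponential (Chernoff) bound: for every `τ > 0`,
`n(ε, I_d) ≤ e^{τ (ε⁻² - 1)} ∏_j ∑_{k ∈ ℤ} exp(-τ a_j |k|^{2b_j})` (`ncard_le_exp`).
The `j`-th factor is at most `exp (C / a_j^m)` with `m` an integer such that `m ⨅ b_j ≥ 1` and `C`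
depending on `τ` and `m` only (`sum_exp_le`), because `e^{-y} ≤ m! / y^m`. If `a_j → ∞`, the sums
`∑_{j<d} C / a_j^m` are `o(d)` by Cesàro, and choosing `τ` proportional to `δ` gives the limit.
-/

lemma finite_coord {α p x : ℝ} (hα : 0 < α) (hp : 0 < p) :
    {k : ℤ | α * |(k : ℝ)| ^ p < x}.Finite := by
  have h : Tendsto (fun y : ℝ => α * y ^ p) atTop atTop :=
    (tendsto_rpow_atTop hp).const_mul_atTop hα
  obtain ⟨R, hR⟩ := (eventually_atTop.1 (h.eventually_ge_atTop x))
  refine (Set.finite_Icc (-⌈R⌉) ⌈R⌉).subset fun k hk => ?_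
  have hk' : |(k : ℝ)| < R := by
    by_contra hc
    exact absurd (hR _ (not_lt.1 hc)) (not_le.2 hk)
  have h2 : ((|k| : ℤ) : ℝ) ≤ (⌈R⌉ : ℤ) := by
    push_cast
    exact hk'.le.trans (Int.le_ceil R)
  exact abs_le.1 (Int.cast_le.1 h2)

/-- Any solution set of the counting problem lies in a finite box. -/
lemma exists_box {d : ℕ} {α p : Fin d → ℝ} (hα : ∀ j, 0 < α j) (hp : ∀ j, 0 < p j) (x : ℝ) :
    ∃ t : Fin d → Finset ℤ,
      {k : Fin d → ℤ | ∑ j, α j * |(k j : ℝ)| ^ p j < x} ⊆ Fintype.piFinset t := by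
  refine ⟨fun j => (finite_coord (x := x) (hα j) (hp j)).toFinset, fun k hk => ?_⟩
  simp only [Finset.mem_coe, Fintype.mem_piFinset, Set.Finite.mem_toFinset, Set.mem_ofPred_eq]
  intro j
  refine lt_of_le_of_lt ?_ hk
  exact Finset.single_le_sum (f := fun j => α j * |(k j : ℝ)| ^ p j)
    (fun i _ => mul_nonneg (hα i).le (Real.rpow_nonneg (abs_nonneg _) _)) (Finset.mem_univ j)

/-- The Chernoff bound for the counting function: `S j` bounds the logarithm of the `j`-th
one-dimensional partition function `∑_{k ∈ ℤ} exp(-τ α_j |k|^{p_j})`. -/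
lemma ncard_le_exp {d : ℕ} {α p : Fin d → ℝ} (hα : ∀ j, 0 < α j) (hp : ∀ j, 0 < p j) (x : ℝ)
    {τ : ℝ} (hτ : 0 < τ) (S : Fin d → ℝ)
    (hS : ∀ j, ∀ s : Finset ℤ, ∑ k ∈ s, Real.exp (-(τ * (α j * |(k : ℝ)| ^ p j)))
      ≤ Real.exp (S j)) :
    (({k : Fin d → ℤ | ∑ j, α j * |(k j : ℝ)| ^ p j < x}.ncard : ℕ) : ℝ)
      ≤ Real.exp (τ * x + ∑ j, S j) := by
  classical
  obtain ⟨t, ht⟩ := exists_box hα hp x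
  set A := {k : Fin d → ℤ | ∑ j, α j * |(k j : ℝ)| ^ p j < x} with hA
  have hfin : A.Finite := (Finset.finite_toSet _).subset ht
  have hsub : hfin.toFinset ⊆ Fintype.piFinset t := by
    intro k hk
    exact ht (hfin.mem_toFinset.1 hk)
  rw [Set.ncard_eq_toFinset_card A hfin]
  calc ((hfin.toFinset.card : ℕ) : ℝ) = ∑ k ∈ hfin.toFinset, (1 : ℝ) := by simp
    _ ≤ ∑ k ∈ hfin.toFinset,
          Real.exp (τ * x) * ∏ j, Real.exp (-(τ * (α j * |(k j : ℝ)| ^ p j))) := by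
        refine Finset.sum_le_sum fun k hk => ?_
        have hk' : ∑ j, α j * |(k j : ℝ)| ^ p j < x := hfin.mem_toFinset.1 hk
        rw [← Real.exp_sum, ← Real.exp_add, Real.one_le_exp_iff, Finset.sum_neg_distrib,
          ← Finset.mul_sum]
        nlinarith
    _ ≤ ∑ k ∈ Fintype.piFinset t,
          Real.exp (τ * x) * ∏ j, Real.exp (-(τ * (α j * |(k j : ℝ)| ^ p j))) :=
        Finset.sum_le_sum_of_subset_of_nonneg hsub fun k _ _ => by positivity
    _ = Real.exp (τ * x) * ∏ j, ∑ k ∈ t j, Real.exp (-(τ * (α j * |(k : ℝ)| ^ p j))) := by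
        rw [← Finset.mul_sum, Finset.prod_univ_sum]
    _ ≤ Real.exp (τ * x) * ∏ j, Real.exp (S j) := by
        refine mul_le_mul_of_nonneg_left ?_ (Real.exp_pos _).le
        exact Finset.prod_le_prod (fun j _ => Finset.sum_nonneg fun k _ => (Real.exp_pos _).le)
          fun j _ => hS j (t j)
    _ = Real.exp (τ * x + ∑ j, S j) := by rw [Real.exp_add, Real.exp_sum]

lemma exp_neg_le (m : ℕ) {y : ℝ} (hy : 0 < y) : Real.exp (-y) ≤ m.factorial / y ^ m := by
  have h := Real.pow_div_factorial_le_exp y hy.le m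
  rw [Real.exp_neg, ← inv_div]
  exact inv_anti₀ (by positivity) h

/-- The one-dimensional partition function is `1 + O(α^{-m})`, the `1` coming from `k = 0`. -/
lemma sum_exp_le {α p τ : ℝ} (hα : 0 < α) (hp : 0 < p) (hτ : 0 < τ) (m : ℕ) (hm : 2 ≤ p * m)
    (s : Finset ℤ) :
    ∑ k ∈ s, Real.exp (-(τ * (α * |(k : ℝ)| ^ p))) ≤
      Real.exp ((m.factorial / τ ^ m * ∑' k : ℤ, 1 / (k : ℝ) ^ 2) / α ^ m) := by
  have hsum : Summable fun k : ℤ => 1 / (k : ℝ) ^ 2 :=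
    Real.summable_one_div_int_pow.2 one_lt_two
  -- At `k = 0` the second summand is `0`, since `1 / 0 = 0`.
  have hterm : ∀ k : ℤ, Real.exp (-(τ * (α * |(k : ℝ)| ^ p))) ≤
      (if k = 0 then 1 else 0) + m.factorial / (τ * α) ^ m * (1 / (k : ℝ) ^ 2) := by
    intro k
    rcases eq_or_ne k 0 with rfl | hk
    · simp [Real.zero_rpow hp.ne']
    · have hk1 : (1 : ℝ) ≤ |(k : ℝ)| := by
        exact_mod_cast Int.one_le_abs hk
      have hk0 : (0 : ℝ) < |(k : ℝ)| := by linarith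
      have hpow : (k : ℝ) ^ 2 ≤ (|(k : ℝ)| ^ p) ^ m := by
        rw [← sq_abs, ← Real.rpow_natCast (|(k : ℝ)| ^ p) m, ← Real.rpow_mul hk0.le,
          ← Real.rpow_natCast]
        exact Real.rpow_le_rpow_of_exponent_le hk1 (by exact_mod_cast hm)
      have hk2 : (0 : ℝ) < (k : ℝ) ^ 2 := by rw [← sq_abs]; positivity
      rw [if_neg hk, zero_add]
      refine (exp_neg_le m (by positivity)).trans ?_
      rw [div_mul_div_comm, mul_one, ← mul_assoc, mul_pow (τ * α)]
      gcongr
  calc _ ≤ ∑ k ∈ s, ((if k = 0 then (1 : ℝ) else 0) +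
            m.factorial / (τ * α) ^ m * (1 / (k : ℝ) ^ 2)) :=
        Finset.sum_le_sum fun k _ => hterm k
    _ ≤ 1 + m.factorial / (τ * α) ^ m * ∑' k : ℤ, 1 / (k : ℝ) ^ 2 := by
        rw [Finset.sum_add_distrib, ← Finset.mul_sum]
        gcongr
        · rw [Finset.sum_ite_eq']
          split_ifs <;> norm_num
        · exact hsum.sum_le_tsum s fun k _ => by positivity
    _ = (m.factorial / τ ^ m * ∑' k : ℤ, 1 / (k : ℝ) ^ 2) / α ^ m + 1 := by
        rw [mul_pow]; field_simp; ring
    _ ≤ _ := Real.add_one_le_exp _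

/-- Partial sums of a nonnegative null sequence are `o(d)`, uniformly in `d` up to a constant. -/
lemma exists_sum_le {u : ℕ → ℝ} (hu : ∀ j, 0 ≤ u j) (h : Tendsto u atTop (nhds 0))
    {η : ℝ} (hη : 0 < η) : ∃ C, 0 ≤ C ∧ ∀ d : ℕ, ∑ j ∈ Finset.range d, u j ≤ C + η * d := by
  obtain ⟨D, hD⟩ := eventually_atTop.1 (h.cesaro.eventually (gt_mem_nhds hη))
  refine ⟨∑ j ∈ Finset.range D, u j, Finset.sum_nonneg fun j _ => hu j, fun d => ?_⟩
  have hC : 0 ≤ ∑ j ∈ Finset.range D, u j := Finset.sum_nonneg fun j _ => hu j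
  rcases Nat.eq_zero_or_pos d with rfl | hd
  · simpa using hC
  have hd' : (0 : ℝ) < d := Nat.cast_pos.2 hd
  rcases le_total D d with hDd | hDd
  · have := hD d hDd
    rw [inv_mul_lt_iff₀ hd'] at this
    linarith
  · have := Finset.sum_le_sum_of_subset_of_nonneg (f := u)
      (Finset.range_mono hDd) (fun j _ _ => hu j)
    have : 0 ≤ η * d := by positivity
    linarith

/-- If the weights are bounded by `C` and `C d < x`, all `2^d` points of `{0,1}^d` are counted. -/
lemma two_pow_le_ncard_s15 {d : ℕ} {α p : Fin d → ℝ} (hα : ∀ j, 0 < α j) (hp : ∀ j, 0 < p j)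
    {C x : ℝ} (hC : ∀ j, α j ≤ C) (hx : C * d < x) :
    2 ^ d ≤ {k : Fin d → ℤ | ∑ j, α j * |(k j : ℝ)| ^ p j < x}.ncard := by
  classical
  obtain ⟨t, ht⟩ := exists_box hα hp x
  have hsub : (↑(Fintype.piFinset fun _ : Fin d => ({0, 1} : Finset ℤ)) : Set (Fin d → ℤ)) ⊆
      {k : Fin d → ℤ | ∑ j, α j * |(k j : ℝ)| ^ p j < x} := by
    intro k hk
    simp only [Finset.mem_coe, Fintype.mem_piFinset, Finset.mem_insert,
      Finset.mem_singleton] at hk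
    refine lt_of_le_of_lt ?_ hx
    calc ∑ j, α j * |(k j : ℝ)| ^ p j ≤ ∑ _j : Fin d, C := by
          refine Finset.sum_le_sum fun j _ => ?_
          rcases hk j with h | h
          · simpa [h, Real.zero_rpow (hp j).ne'] using (hα j).le.trans (hC j)
          · simpa [h] using hC j
      _ = C * d := by simp [mul_comm]
  have h := Set.ncard_le_ncard hsub ((Finset.finite_toSet _).subset ht)
  rw [Set.ncard_coe_finset, Fintype.card_piFinset] at h
  simpa using h

/-- For `(2,1)`-weak tractability, `a_j → ∞` suffices. -/
lemma wt_of_tendsto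
    (a b : ℕ → ℝ) (ha : ∀ j, 0 < a j) (hb : ∀ j, 0 < b j)
    (hbinf : 0 < ⨅ j, b j) (h : Tendsto a atTop atTop) (δ : ℝ) (hδ : 0 < δ) :
    ∃ M : ℝ, 0 < M ∧
        ∀ d : ℕ, 0 < d → ∀ ε : ℝ, ε ∈ Set.Ioo (0 : ℝ) 1 → M ≤ ε⁻¹ + d →
          |Real.log (({k : Fin d → ℤ |
              ∑ j : Fin d, a j * |(k j : ℝ)| ^ (2 * b j) < ε⁻¹ ^ 2 - 1}).ncard) /
            (ε⁻¹ ^ 2 + (d : ℝ))| ≤ δ := by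
  have hbdd : BddBelow (Set.range b) := ⟨0, by rintro _ ⟨j, rfl⟩; exact (hb j).le⟩
  obtain ⟨m, hm⟩ := exists_nat_ge (1 / ⨅ j, b j)
  have hm1 : ∀ j, 2 ≤ 2 * b j * m := by
    intro j
    have h1 : 1 ≤ m * ⨅ j, b j := (div_le_iff₀ hbinf).1 hm
    have h2 : (⨅ j, b j) ≤ b j := ciInf_le hbdd j
    have h3 : (m : ℝ) * (⨅ j, b j) ≤ m * b j := mul_le_mul_of_nonneg_left h2 m.cast_nonneg
    linarith
  have hm0 : m ≠ 0 := by
    rintro rfl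
    have := hm1 0
    norm_num at this
  set η := δ / 3 with hη
  have hη0 : 0 < η := by positivity
  set K : ℝ := m.factorial / η ^ m * ∑' k : ℤ, 1 / (k : ℝ) ^ 2 with hK
  have hK0 : 0 ≤ K := mul_nonneg (by positivity) (tsum_nonneg fun k => by positivity)
  have hu0 : ∀ j, 0 ≤ K / a j ^ m := fun j => div_nonneg hK0 (pow_pos (ha j) m).le
  have hu : Tendsto (fun j => K / a j ^ m) atTop (nhds 0) :=
    ((tendsto_pow_atTop hm0).comp h).const_div_atTop K
  obtain ⟨C, hC0, hC⟩ := exists_sum_le hu0 hu hη0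
  refine ⟨C / η + 1, by positivity, fun d hd ε hε hM => ?_⟩
  have he1 : 1 < ε⁻¹ := (one_lt_inv₀ hε.1).2 hε.2
  have hden : 0 < ε⁻¹ ^ 2 + (d : ℝ) := by positivity
  have hcount := ncard_le_exp (α := fun j : Fin d => a j) (p := fun j : Fin d => 2 * b j)
    (fun j => ha j) (fun j => by have := hb j; positivity) (ε⁻¹ ^ 2 - 1) hη0
    (fun j => K / a j ^ m)
    (fun j s => sum_exp_le (ha j) (by have := hb j; positivity) hη0 m (hm1 j) s)
  rw [Fin.sum_univ_eq_sum_range (fun j => K / a j ^ m) d] at hcount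
  have hS0 : 0 ≤ ∑ j ∈ Finset.range d, K / a j ^ m := Finset.sum_nonneg fun j _ => hu0 j
  have hx0 : 0 ≤ η * (ε⁻¹ ^ 2 - 1) := mul_nonneg hη0.le (by nlinarith)
  have hlog : Real.log (({k : Fin d → ℤ |
      ∑ j : Fin d, a j * |(k j : ℝ)| ^ (2 * b j) < ε⁻¹ ^ 2 - 1}).ncard) ≤
      η * (ε⁻¹ ^ 2 - 1) + ∑ j ∈ Finset.range d, K / a j ^ m := by
    rcases Nat.eq_zero_or_pos ({k : Fin d → ℤ |
      ∑ j : Fin d, a j * |(k j : ℝ)| ^ (2 * b j) < ε⁻¹ ^ 2 - 1}).ncard with h0 | h0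
    · rw [h0, Nat.cast_zero, Real.log_zero]
      linarith
    · exact (Real.log_le_iff_le_exp (Nat.cast_pos.2 h0)).2 hcount
  rw [abs_of_nonneg (div_nonneg (Real.log_natCast_nonneg _) hden.le), div_le_iff₀ hden]
  have hCη : C ≤ η * (ε⁻¹ ^ 2 + d) := by
    rw [← div_le_iff₀' hη0]
    nlinarith
  have hδη : δ = 3 * η := by rw [hη]; ring
  rw [hδη]
  have := hC d
  nlinarith [mul_pos hη0 (show 0 < ε⁻¹ ^ 2 by positivity)]

/-- For the weighted anisotropic Sobolev embeddings with information complexity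
`n(ε, I_d) = #{k ∈ ℤ^d : ∑_{j=1}^d a_j |k_j|^{2b_j} < ε^{-2} - 1}`:
`(2,1)`-weak tractability holds iff `lim a_j = ∞`. -/
theorem two_one_WT_iff_cond
    (a b : ℕ → ℝ) (ha : ∀ j, 0 < a j) (hb : ∀ j, 0 < b j)
    (hamono : Monotone a) (hbinf : 0 < ⨅ j, b j) :
    (∀ δ : ℝ, 0 < δ → ∃ M : ℝ, 0 < M ∧
        ∀ d : ℕ, 0 < d → ∀ ε : ℝ, ε ∈ Set.Ioo (0 : ℝ) 1 → M ≤ ε⁻¹ + d →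
          |Real.log (({k : Fin d → ℤ |
              ∑ j : Fin d, a j * |(k j : ℝ)| ^ (2 * b j) < ε⁻¹ ^ 2 - 1}).ncard) /
            (ε⁻¹ ^ 2 + (d : ℝ))| ≤ δ) ↔
      Tendsto a atTop atTop := by
  refine ⟨fun H => ?_, wt_of_tendsto a b ha hb hbinf⟩
  by_contra hna
  obtain ⟨C, hC⟩ : ∃ C, ∀ j, a j ≤ C := by
    by_contra! hc
    exact hna (tendsto_atTop_atTop_of_monotone hamono fun C => (hc C).imp fun _ h => h.le)
  have hC0 : 0 < C := (ha 0).trans_le (hC 0)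
  have hlog2 : 0 < Real.log 2 := Real.log_pos one_lt_two
  obtain ⟨M, hM0, hM⟩ := H (Real.log 2 / (C + 4)) (by positivity)
  obtain ⟨d, hd⟩ := exists_nat_ge (M + 1)
  have hd1 : (1 : ℝ) ≤ d := by linarith
  have hd0 : 0 < d := by exact_mod_cast zero_lt_one.trans_le hd1
  have hCd : 0 < C * d := by positivity
  -- Here `ε⁻¹ = √(C d + 2)`, so `ε⁻² - 1 = C d + 1` exceeds the bound `C d` for all of `{0,1}^d`.
  have hs1 : 1 < √(C * d + 2) := by
    rw [Real.lt_sqrt zero_le_one]; linarith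
  have hsq : √(C * d + 2) ^ 2 = C * d + 2 := Real.sq_sqrt (by linarith)
  have hfinal := hM d hd0 (√(C * d + 2))⁻¹ ⟨by positivity, inv_lt_one_of_one_lt₀ hs1⟩
    (by rw [inv_inv]; linarith)
  rw [inv_inv, hsq] at hfinal
  have hcount := two_pow_le_ncard_s15 (α := fun j : Fin d => a j) (p := fun j : Fin d => 2 * b j)
    (fun j => ha j) (fun j => by have := hb j; positivity) (fun j => hC j)
    (show C * d < C * d + 2 - 1 by linarith)
  have hlog : d * Real.log 2 ≤ Real.log (({k : Fin d → ℤ |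
      ∑ j : Fin d, a j * |(k j : ℝ)| ^ (2 * b j) < C * d + 2 - 1}).ncard) := by
    rw [← Real.log_pow]
    exact Real.log_le_log (by positivity) (by exact_mod_cast hcount)
  have h1 := (le_abs_self _).trans hfinal
  rw [div_le_div_iff₀ (by positivity) (by positivity)] at h1
  have h2 : d * Real.log 2 * (C + 4) ≤ Real.log 2 * (C * d + 2 + d) :=
    (mul_le_mul_of_nonneg_right hlog (by positivity)).trans h1
  nlinarith [mul_le_mul_of_nonneg_left hd1 hlog2.le]
end
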